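/- There exist two unitals U₁ and U₂ in PG(2,16) whose associated 2-(65,5,1) designs are not isomorphic; moreover they can be chosen so that the automorphism group of the design of U₁ has order 768 and the automorphism group of the design of U₂ has order 249600. -/

import Mathlib

noncomputable section

/-- The field `GF(16)` of 16 elements. -/
abbrev K16 := GaloisField 2 4

/-- The 3-dimensional vector space over `GF(16)`. -/
abbrev V16 := Fin 3 → K16

/-- The point set of the Desarguesian projective plane `PG(2,16)`:
1-dimensional subspaces of the 3-dimensional vector space over `GF(16)`. -/
abbrev PG216 := Projectivization K16 V16

/-- The Hermitian set `H = { [x : y : z] ∈ PG(2,16) : x⁵ + y⁵ + z⁵ = 0 }`.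
(The defining condition is invariant under scalar multiplication, so it may be
evaluated on the chosen representative of each point.) -/
def HermitianSet : Set PG216 :=
  {p | p.rep 0 ^ 5 + p.rep 1 ^ 5 + p.rep 2 ^ 5 = 0}
/-- A unital in `PG(2,16)`: a set of `4³ + 1 = 65` points meeting every line
(2-dimensional subspace) in exactly `1` or exactly `4 + 1 = 5` points. -/
def IsUnitalPG (U : Set PG216) : Prop :=
  U.ncard = 65 ∧
    ∀ W : Submodule K16 V16, Module.finrank K16 W = 2 →
      (U ∩ {p : PG216 | p.submodule ≤ W}).ncard = 1 ∨
      (U ∩ {p : PG216 | p.submodule ≤ W}).ncard = 5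

/-- The blocks of the design associated to a unital `U` in `PG(2,16)`:
intersections of `U` with lines meeting it in 5 points, as subsets of `U`. -/
def blocksOf (U : Set PG216) : Set (Set ↥U) :=
  {b | ∃ W : Submodule K16 V16, Module.finrank K16 W = 2 ∧
        (U ∩ {p : PG216 | p.submodule ≤ W}).ncard = 5 ∧
        b = {x : ↥U | x.1.submodule ≤ W}}

/-- An isomorphism of designs: a bijection between the point sets mapping every block
to a block. -/
def DesignIso {α β : Type*} (B₁ : Set (Set α)) (B₂ : Set (Set β)) : Prop :=
  ∃ f : α ≃ β, ∀ b ∈ B₁, ⇑f '' b ∈ B₂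

/-! Let `T x = x + x⁴` be the trace of `GF(16)` over `GF(4)`. The `GF(4)`-quadratic form
`Q_α x = x⁵ + T (α x²)` is anisotropic for `α = 0` and `α = 1`, so each nonzero value is taken five
times, and `U_α = {[0 : 1 : 0]} ∪ {[x : y : 1] | T y = Q_α x}` is a unital.

The affine points of `U_α` form a Heisenberg group of order 64 acting by translations. The blocks
through `[0 : 1 : 0]` are the lines of constant `x`, and three points with different `x` lie on
other blocks only if their abscissae are affinely independent over `GF(4)`; conversely, every
affinely independent triple of abscissae arises from a block. An automorphism fixing `[0 : 1 : 0]`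
and `[0 : 0 : 1]` therefore acts additively on the abscissae. Moreover it is determined by this
action, so it normalizes the translations and is a homomorphism of the Heisenberg group; as the
square of `(x, y)` is `(0, x⁵)`, it respects the addition of norms and must be
`(x, y) ↦ (c σ x, c⁵ σ y)` with `c³ σ α = α`. This leaves 60 maps for `α = 0` and 12 for `α = 1`.

No O'Nan configuration has `[0 : 1 : 0]` as a vertex. For `α = 0` an inversion moves this point, so
the group is transitive, its order is `65 · 64 · 60`, and there are no O'Nan configurations at all.
For `α = 1` there is one, so by translation every affine point is a vertex; hence `[0 : 1 : 0]` is
fixed, the order is `64 · 12`, and the two designs are not isomorphic. -/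

/-! ### The field of sixteen elements -/

theorem finite_of_card_eq_sixteen {K : Type*} [Fact (Nat.card K = 16)] : Finite K :=
  Nat.finite_of_card_ne_zero <| by rw [Fact.out (p := Nat.card K = 16)]; norm_num

attribute [local instance] finite_of_card_eq_sixteen

section FieldOfOrderSixteen

theorem pow_sixteen_eq_self {K : Type*} [Field K] [Fact (Nat.card K = 16)] (x : K) :
    x ^ 16 = x := by
  have := Fintype.ofFinite K
  have hcard : Fintype.card K = 16 := by
    rw [Fintype.card_eq_nat_card, Fact.out (p := Nat.card K = 16)]
  rw [← hcard, FiniteField.pow_card]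

variable {K : Type*} [Field K] [CharP K 2]

/-- The trace of `GF(16)` over `GF(4)`. The subfield `GF(4)` itself never appears as a type:
its elements are those `t` with `t ^ 4 = t`. -/
def relTrace : K →+ K where
  toFun x := x + x ^ 4
  map_zero' := by simp
  map_add' x y := by grind

theorem relTrace_apply (x : K) : relTrace x = x + x ^ 4 := rfl

theorem relTrace_mul_of_pow_four_eq {t : K} (ht : t ^ 4 = t) (x : K) :
    relTrace (t * x) = t * relTrace x := by
  grind [relTrace_apply]

theorem relTrace_eq_zero_iff {x : K} : relTrace x = 0 ↔ x ^ 4 = x := by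
  grind [relTrace_apply]

theorem pow_four_add_eq_self {s t : K} (hs : s ^ 4 = s) (ht : t ^ 4 = t) :
    (s + t) ^ 4 = s + t := by
  grind

theorem pow_four_eq_self_iff {ω t : K} (hω : ω ^ 2 = ω + 1) :
    t ^ 4 = t ↔ t = 0 ∨ t = 1 ∨ t = ω ∨ t = ω + 1 := by
  have factorization : t ^ 4 + t = t * (t + 1) * (t + ω) * (t + (ω + 1)) := by grind
  rw [← CharTwo.add_eq_zero, factorization]
  simp only [mul_eq_zero, CharTwo.add_eq_zero, or_assoc]

theorem card_roots_pow_four [DecidableEq K] {ω : K} (hω : ω ^ 2 = ω + 1) :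
    ({0, 1, ω, ω + 1} : Finset K).card = 4 := by
  have h0 : ω ≠ 0 := by grind
  have h1 : ω ≠ 1 := by grind
  simp [Finset.card_insert_of_notMem, h0, h0.symm, h1, h1.symm, eq_comm (a := (0 : K)),
    CharTwo.add_eq_zero]

theorem ncard_pow_four_eq_self {ω : K} (hω : ω ^ 2 = ω + 1) :
    {t : K | t ^ 4 = t}.ncard = 4 := by
  classical
  have hset : {t : K | t ^ 4 = t} = ({0, 1, ω, ω + 1} : Finset K) := by
    ext t
    simp [pow_four_eq_self_iff hω]
  rw [hset, Set.ncard_coe_finset, card_roots_pow_four hω]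

section

variable [Fact (Nat.card K = 16)]

theorem relTrace_pow_four (x : K) : relTrace x ^ 4 = relTrace x := by
  grind [relTrace_apply, pow_sixteen_eq_self x]

theorem exists_relTrace_ne_zero : ∃ x : K, relTrace x ≠ 0 := by
  by_contra! h
  have := Fintype.ofFinite K
  have hcard : Fintype.card K = 16 := by
    rw [Fintype.card_eq_nat_card, Fact.out (p := Nat.card K = 16)]
  have hdegree := FiniteField.X_pow_card_sub_X_natDegree_eq K (show 1 < 4 by norm_num)
  refine FiniteField.X_pow_card_sub_X_ne_zero K (show 1 < 4 by norm_num) ?_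
  refine Polynomial.eq_zero_of_natDegree_lt_card_of_eval_eq_zero _ Function.injective_id ?_ ?_
  · simpa [sub_eq_zero] using fun x => relTrace_eq_zero_iff.1 (h x)
  · rw [hdegree, hcard]
    norm_num

variable (K) in
theorem exists_pow_four_eq_add_one : ∃ ζ : K, ζ ^ 4 = ζ + 1 := by
  obtain ⟨x, hx⟩ := exists_relTrace_ne_zero (K := K)
  have h4 := relTrace_pow_four x
  refine ⟨x / relTrace x, ?_⟩
  rw [div_pow, h4]
  grind [relTrace_apply]

variable (K) in
theorem exists_sq_eq_add_one : ∃ ω : K, ω ^ 2 = ω + 1 :=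
  let ⟨ζ, hζ⟩ := exists_pow_four_eq_add_one K
  ⟨ζ ^ 2 + ζ, by grind⟩

theorem exists_relTrace_eq {d : K} (hd : d ^ 4 = d) : ∃ x, relTrace x = d := by
  obtain ⟨ζ, hζ⟩ := exists_pow_four_eq_add_one K
  exact ⟨d * ζ, by grind [relTrace_apply]⟩

theorem ncard_relTrace_eq {d : K} (hd : d ^ 4 = d) : {x | relTrace x = d}.ncard = 4 := by
  obtain ⟨ω, hω⟩ := exists_sq_eq_add_one K
  obtain ⟨y, hy⟩ := exists_relTrace_eq hd
  have hset : {x | relTrace x = d} = (y + ·) '' {t | t ^ 4 = t} := by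
    ext x
    rw [Set.image_add_left, Set.mem_preimage, Set.mem_ofPred_eq, Set.mem_ofPred_eq,
      ← relTrace_eq_zero_iff, map_add, map_neg, hy, neg_add_eq_zero, eq_comm]
  rw [hset, Set.ncard_image_of_injective _ (add_right_injective y), ncard_pow_four_eq_self hω]

end

/-! ### The quadratic form -/

/-- The `GF(4)`-quadratic form on `GF(16)` whose graph under the trace is the unital `U_α`. -/
def quadForm (α x : K) : K := x ^ 5 + relTrace (α * x ^ 2)

/-- The polar form of `quadForm α`, an alternating `GF(4)`-bilinear form independent of `α`. -/
def altForm (u v : K) : K := u * v ^ 4 + u ^ 4 * v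

/-- `quadForm α` has no nontrivial zero. -/
def IsAnisotropic (α : K) : Prop := ∀ x, quadForm α x = 0 → x = 0

theorem quadForm_zero (α : K) : quadForm α 0 = 0 := by simp [quadForm]

theorem quadForm_add (α x y : K) :
    quadForm α (x + y) = quadForm α x + quadForm α y + altForm x y := by
  simp only [quadForm, altForm, relTrace_apply]
  grind

theorem quadForm_mul {t : K} (ht : t ^ 4 = t) (α x : K) :
    quadForm α (t * x) = t ^ 2 * quadForm α x := by
  grind [quadForm, relTrace_apply]

theorem altForm_add_left (u v w : K) : altForm (u + v) w = altForm u w + altForm v w := by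
  grind [altForm]

theorem altForm_add_right (u v w : K) : altForm u (v + w) = altForm u v + altForm u w := by
  grind [altForm]

theorem altForm_mul_right {t : K} (ht : t ^ 4 = t) (u v : K) :
    altForm u (t * v) = t * altForm u v := by
  grind [altForm]

theorem altForm_comm (u v : K) : altForm u v = altForm v u := by
  grind [altForm]

theorem altForm_self (u : K) : altForm u u = 0 := by
  grind [altForm]

theorem exists_eq_mul_of_altForm_eq_zero {u v : K} (hu : u ≠ 0) (h : altForm u v = 0) :
    ∃ t, t ^ 4 = t ∧ v = t * u := by
  refine ⟨v / u, ?_, (div_mul_cancel₀ v hu).symm⟩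
  grind [altForm]

theorem isAnisotropic_zero : IsAnisotropic (0 : K) := by
  intro x hx
  simpa [quadForm] using hx

theorem ncard_quadForm_eq_mul {α c : K} (hc0 : c ≠ 0) (hc : c ^ 4 = c) :
    {x | quadForm α x = c}.ncard = {x | quadForm α x = 1}.ncard := by
  have hset : {x | quadForm α x = c} = (c ^ 2 * ·) '' {x | quadForm α x = 1} := by
    ext x
    refine ⟨fun hx => ⟨c * x, ?_, ?_⟩, ?_⟩
    · rw [Set.mem_ofPred_eq] at hx ⊢
      rw [quadForm_mul hc, hx]
      grind
    · grind
    · rintro ⟨y, hy, rfl⟩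
      rw [Set.mem_ofPred_eq] at hy ⊢
      rw [quadForm_mul (by grind), hy]
      grind
  rw [hset, Set.ncard_image_of_injective _ (mul_right_injective₀ (pow_ne_zero 2 hc0))]

theorem ncard_quadForm_eq_zero {α : K} (hα : IsAnisotropic α) :
    {x | quadForm α x = 0}.ncard = 1 := by
  rw [Set.ncard_eq_one]
  exact ⟨0, Set.ext fun x => ⟨hα x, fun hx => by rw [hx]; exact quadForm_zero α⟩⟩

section

variable [Fact (Nat.card K = 16)]

theorem quadForm_pow_four (α x : K) : quadForm α x ^ 4 = quadForm α x := by
  have := relTrace_pow_four (α * x ^ 2)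
  grind [quadForm, pow_sixteen_eq_self x]

theorem altForm_pow_four (u v : K) : altForm u v ^ 4 = altForm u v := by
  grind [altForm, pow_sixteen_eq_self u, pow_sixteen_eq_self v]

theorem altForm_eq_relTrace (u v : K) : altForm u v = relTrace (u ^ 4 * v) := by
  grind [altForm, relTrace_apply, pow_sixteen_eq_self u]

theorem isAnisotropic_one : IsAnisotropic (1 : K) := by
  intro x hx
  by_contra h0
  have hpow : x ^ 15 = 1 := by
    have := pow_sixteen_eq_self x
    grind
  have hquad : (x ^ 3) ^ 2 = x ^ 3 + 1 := by
    grind [quadForm, relTrace_apply]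
  grind

theorem exists_relTrace_mul_eq {u v a b : K} (huv : altForm u v ≠ 0) (ha : a ^ 4 = a)
    (hb : b ^ 4 = b) : ∃ m, relTrace (m * u) = a ∧ relTrace (m * v) = b := by
  have h4 := altForm_pow_four u v
  have hu := pow_sixteen_eq_self u
  have hv := pow_sixteen_eq_self v
  refine ⟨(a * v ^ 4 + b * u ^ 4) / altForm u v, ?_, ?_⟩
  all_goals
    rw [div_mul_eq_mul_div, div_eq_inv_mul, relTrace_mul_of_pow_four_eq (by rw [inv_pow, h4]),
      inv_mul_eq_iff_eq_mul₀ huv]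
    simp only [altForm, relTrace_apply]
    grind

theorem ncard_quadForm_eq {α c : K} (hα : IsAnisotropic α) (hc0 : c ≠ 0) (hc : c ^ 4 = c) :
    {x | quadForm α x = c}.ncard = 5 := by
  classical
  have := Fintype.ofFinite K
  obtain ⟨ω, hω⟩ := exists_sq_eq_add_one K
  set values : Finset K := {0, 1, ω, ω + 1} with hvalues
  have mem_values (d : K) : d ∈ values ↔ d ^ 4 = d := by
    simp [hvalues, pow_four_eq_self_iff hω]
  have card_fibre (d : K) :
      (Finset.univ.filter fun x => quadForm α x = d).card = {x | quadForm α x = d}.ncard := by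
    rw [Set.ncard_eq_toFinset_card', Set.toFinset_ofPred]
  have fibres := Finset.card_eq_sum_card_fiberwise (s := Finset.univ) (t := values)
    fun x _ => (mem_values _).2 (quadForm_pow_four α x)
  have equal_fibres : ∀ d ∈ values.erase 0,
      {x | quadForm α x = d}.ncard = {x | quadForm α x = c}.ncard := by
    intro d hd
    rw [Finset.mem_erase, mem_values] at hd
    rw [ncard_quadForm_eq_mul hd.1 hd.2, ncard_quadForm_eq_mul hc0 hc]
  simp only [card_fibre] at fibres
  rw [← Finset.add_sum_erase _ _ ((mem_values 0).2 (by simp)), Finset.sum_congr rfl equal_fibres,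
    Finset.sum_const, Finset.card_erase_of_mem ((mem_values 0).2 (by simp)),
    card_roots_pow_four hω, ncard_quadForm_eq_zero hα, Finset.card_univ,
    Fintype.card_eq_nat_card, Fact.out (p := Nat.card K = 16), smul_eq_mul] at fibres
  omega

end

end FieldOfOrderSixteen

/-! ### Additive maps of the field -/

section AdditiveMaps

variable {K : Type*} [Field K] [CharP K 2]

theorem eq_zero_of_relTrace_mul_eq_zero {m u v : K} (huv : altForm u v ≠ 0)
    (hu : relTrace (m * u) = 0) (hv : relTrace (m * v) = 0) : m = 0 := by
  rw [relTrace_eq_zero_iff] at hu hv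
  have : m ^ 5 * altForm u v = 0 := by
    grind [altForm]
  simpa [huv] using this

theorem altForm_ne_zero_of_altForm_eq_zero {u v w : K} (hv : v ≠ 0) (huv : altForm u v = 0)
    (huw : altForm u w ≠ 0) : altForm v w ≠ 0 := by
  have hu : u ≠ 0 := by
    rintro rfl
    simp [altForm] at huw
  obtain ⟨t, ht, rfl⟩ := exists_eq_mul_of_altForm_eq_zero hu huv
  rw [altForm_comm, altForm_mul_right ht, altForm_comm w]
  exact mul_ne_zero (left_ne_zero_of_mul hv) huw

theorem eq_id_or_eq_pow_four_of_pow_five_eq {h : K →+ K} (h1 : h 1 = 1)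
    (hN : ∀ x, h x ^ 5 = x ^ 5) : (∀ x, h x = x) ∨ ∀ x, h x = x ^ 4 := by
  have pointwise (x : K) : h x = x ∨ h x = x ^ 4 := by
    have hx := hN x
    have hx1 := hN (x + 1)
    rw [map_add, h1] at hx1
    have hroots : (h x + x) * (h x + x ^ 4) = 0 := by
      grind
    simpa [CharTwo.add_eq_zero] using hroots
  by_contra! hcon
  obtain ⟨⟨x, hx⟩, ⟨y, hy⟩⟩ := hcon
  have hxy := pointwise (x + y)
  rw [map_add, (pointwise x).resolve_left hx, (pointwise y).resolve_right hy] at hxy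
  grind

variable [Fact (Nat.card K = 16)]

theorem exists_altForm_ne_zero {u : K} (hu : u ≠ 0) : ∃ v, altForm u v ≠ 0 := by
  obtain ⟨ζ, hζ⟩ := exists_pow_four_eq_add_one K
  refine ⟨ζ * u, ?_⟩
  have : altForm u (ζ * u) = u ^ 5 := by grind [altForm]
  simpa [this] using hu

theorem eq_zero_of_altForm_eq_zero {u v w : K} (huv : altForm u v ≠ 0)
    (hu : altForm w u = 0) (hv : altForm w v = 0) : w = 0 := by
  rw [altForm_eq_relTrace] at hu hv
  simpa using eq_zero_of_relTrace_mul_eq_zero huv hu hv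

variable {φ : Equiv.Perm K}

theorem altForm_map_add_eq_zero (h0 : φ 0 = 0)
    (hφ : ∀ x y z, altForm (φ x + φ y) (φ x + φ z) = 0 ↔ altForm (x + y) (x + z) = 0)
    {u v : K} (huv : altForm u v ≠ 0) :
    altForm (φ u + φ (u + v)) (φ v) = 0 := by
  by_contra hne
  set w := φ (u + v) with hw
  set b := altForm (φ u + w) (φ u) / altForm (φ u + w) (φ v) with hb
  have hb4 : b ^ 4 = b := by rw [hb, div_pow, altForm_pow_four, altForm_pow_four]
  obtain ⟨z, hz⟩ := φ.surjective (b * φ v)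
  have collinear₁ : altForm v (u + z) = 0 := by
    have : altForm (φ u + w) (φ u + φ z) = 0 := by
      rw [hz, altForm_add_right, altForm_mul_right hb4, hb, div_mul_cancel₀ _ hne,
        CharTwo.add_self_eq_zero]
    rw [hw, hφ] at this
    rwa [← add_assoc, CharTwo.add_self_eq_zero, zero_add] at this
  have collinear₂ : altForm v z = 0 := by
    have := hφ 0 v z
    rw [h0, zero_add, zero_add, zero_add, zero_add, hz, altForm_mul_right hb4, altForm_self,
      mul_zero] at this
    exact this.1 rfl
  rw [altForm_add_right, collinear₂, add_zero, altForm_comm] at collinear₁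
  exact huv collinear₁

theorem map_add_of_altForm_ne_zero (h0 : φ 0 = 0)
    (hφ : ∀ x y z, altForm (φ x + φ y) (φ x + φ z) = 0 ↔ altForm (x + y) (x + z) = 0)
    {u v : K} (huv : altForm u v ≠ 0) :
    φ (u + v) = φ u + φ v := by
  have hφuv : altForm (φ u) (φ v) ≠ 0 := by
    have := hφ 0 u v
    simp only [h0, zero_add] at this
    exact mt this.1 huv
  have hv := altForm_map_add_eq_zero h0 hφ huv
  have hu := altForm_map_add_eq_zero h0 hφ (altForm_comm u v ▸ huv)
  rw [add_comm v u] at hu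
  rw [← CharTwo.add_eq_zero]
  refine eq_zero_of_altForm_eq_zero hφuv ?_ ?_
  · grind [altForm_add_left, altForm_self]
  · grind [altForm_add_left, altForm_self]

/-- The fundamental theorem of affine geometry for the plane `AG(2, 4)`, without its
multiplicative half. -/
theorem map_add_of_altForm_eq_zero_iff (h0 : φ 0 = 0)
    (hφ : ∀ x y z, altForm (φ x + φ y) (φ x + φ z) = 0 ↔ altForm (x + y) (x + z) = 0)
    (u v : K) : φ (u + v) = φ u + φ v := by
  have additive {u v : K} := map_add_of_altForm_ne_zero (u := u) (v := v) h0 hφ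
  by_cases huv : altForm u v = 0
  swap
  · exact additive huv
  rcases eq_or_ne u 0 with rfl | hu
  · rw [h0, zero_add, zero_add]
  rcases eq_or_ne v 0 with rfl | hv
  · rw [h0, add_zero, add_zero]
  rcases eq_or_ne (u + v) 0 with hw | hw
  · rw [hw, CharTwo.add_eq_zero.1 hw, h0, CharTwo.add_self_eq_zero]
  obtain ⟨z, hz⟩ := exists_altForm_ne_zero hu
  have hvz : altForm v z ≠ 0 := altForm_ne_zero_of_altForm_eq_zero hv huv hz
  have huw : altForm u (u + v) = 0 := by rw [altForm_add_right, altForm_self, huv, add_zero]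
  have hwz : altForm (u + v) z ≠ 0 := altForm_ne_zero_of_altForm_eq_zero hw huw hz
  have huvz : altForm u (v + z) ≠ 0 := by rwa [altForm_add_right, huv, zero_add]
  refine add_right_cancel (b := φ z) ?_
  rw [← additive hwz, add_assoc, additive huvz, additive hvz, add_assoc]

section Norm

theorem exists_pow_five_eq {d : K} (hd : d ^ 4 = d) : ∃ x, x ^ 5 = d := by
  rcases eq_or_ne d 0 with rfl | hd0
  · exact ⟨0, by simp⟩
  have hfibre := ncard_quadForm_eq isAnisotropic_zero hd0 hd
  obtain ⟨x, hx⟩ := Set.nonempty_of_ncard_ne_zero (hfibre.trans_ne (by norm_num))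
  exact ⟨x, by simpa [quadForm] using hx⟩

theorem pow_five_map_cases {h : K →+ K} (h1 : h 1 = 1)
    (hN : ∀ x y z, x ^ 5 + y ^ 5 = z ^ 5 → h x ^ 5 + h y ^ 5 = h z ^ 5) {ω ν : K}
    (hω : ω ^ 2 = ω + 1) (hν : ν ^ 5 = ω) (x : K) :
    x ^ 5 = 0 ∧ h x ^ 5 = 0 ∨ x ^ 5 = 1 ∧ h x ^ 5 = 1 ∨ x ^ 5 = ω ∧ h x ^ 5 = h ν ^ 5 ∨
      x ^ 5 = ω + 1 ∧ h x ^ 5 = h ν ^ 5 + 1 := by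
  have congr_norm (y : K) (hxy : x ^ 5 = y ^ 5) : h x ^ 5 = h y ^ 5 := by
    simpa using hN x 0 y (by simpa using hxy)
  have fourth : (x ^ 5) ^ 4 = x ^ 5 := by grind [pow_sixteen_eq_self x]
  rcases (pow_four_eq_self_iff hω).1 fourth with hx | hx | hx | hx
  · exact .inl ⟨hx, by simpa using congr_norm 0 (by simpa using hx)⟩
  · exact .inr (.inl ⟨hx, by simpa [h1] using congr_norm 1 (by simpa using hx)⟩)
  · exact .inr (.inr (.inl ⟨hx, congr_norm ν (by rw [hx, hν])⟩))
  · refine .inr (.inr (.inr ⟨hx, ?_⟩))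
    simpa [h1] using (hN ν 1 x (by rw [hν, hx, one_pow])).symm

theorem pow_five_map_eq_or {h : K →+ K} (hinj : Function.Injective h) (h1 : h 1 = 1)
    (hN : ∀ x y z, x ^ 5 + y ^ 5 = z ^ 5 → h x ^ 5 + h y ^ 5 = h z ^ 5) :
    (∀ x, h x ^ 5 = x ^ 5) ∨ ∀ x, h x ^ 5 = (x ^ 5) ^ 2 := by
  obtain ⟨ω, hω⟩ := exists_sq_eq_add_one K
  obtain ⟨ν, hν⟩ := exists_pow_five_eq (d := ω) (by grind)
  have cases_norm := pow_five_map_cases h1 hN hω hν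
  have norm_eq_zero (x : K) : h x ^ 5 = 0 ↔ x ^ 5 = 0 := by
    simp [map_eq_zero_iff h hinj]
  have hν0 : h ν ^ 5 ≠ 0 := by
    rw [Ne, norm_eq_zero, hν]
    grind
  have hν1 : h ν ^ 5 ≠ 1 := by
    intro hcon
    have := cases_norm (ν ^ 2)
    have := norm_eq_zero (ν ^ 2)
    grind
  have fourth : (h ν ^ 5) ^ 4 = h ν ^ 5 := by grind [pow_sixteen_eq_self (h ν)]
  rcases (pow_four_eq_self_iff hω).1 fourth with hw | hw | hw | hw
  · exact absurd hw hν0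
  · exact absurd hw hν1
  · left
    intro x
    rcases cases_norm x with hx | hx | hx | hx <;> grind
  · right
    intro x
    rcases cases_norm x with hx | hx | hx | hx <;> grind

theorem exists_ringEquiv_of_pow_five {φ : K →+ K} (hinj : Function.Injective φ)
    (hN : ∀ x y z, x ^ 5 + y ^ 5 = z ^ 5 → φ x ^ 5 + φ y ^ 5 = φ z ^ 5) :
    ∃ σ : K ≃+* K, ∀ x, φ x = φ 1 * σ x := by
  have hc : φ 1 ≠ 0 := by simp [map_eq_zero_iff φ hinj]
  set h : K →+ K := (AddMonoidHom.mulLeft (φ 1)⁻¹).comp φ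
  have happly (x : K) : h x = (φ 1)⁻¹ * φ x := rfl
  have h1 : h 1 = 1 := inv_mul_cancel₀ hc
  have hhinj : Function.Injective h := (mul_right_injective₀ (inv_ne_zero hc)).comp hinj
  have hhN (x y z : K) (hxyz : x ^ 5 + y ^ 5 = z ^ 5) : h x ^ 5 + h y ^ 5 = h z ^ 5 := by
    simp only [happly, mul_pow, ← mul_add, hN x y z hxyz]
  suffices ∃ n, ∀ x, h x = x ^ 2 ^ n by
    obtain ⟨n, hn⟩ := this
    refine ⟨iterateFrobeniusEquiv K 2 n, fun x => ?_⟩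
    rw [iterateFrobeniusEquiv_def, ← hn, happly, mul_inv_cancel_left₀ hc]
  rcases pow_five_map_eq_or hhinj h1 hhN with hid | hsq
  · rcases eq_id_or_eq_pow_four_of_pow_five_eq h1 hid with hσ | hσ
    · exact ⟨0, by simpa using hσ⟩
    · exact ⟨2, hσ⟩
  · set h' : K →+ K := (iterateFrobenius K 2 3 : K →+ K).comp h
    have happly' (x : K) : h' x = h x ^ 8 := rfl
    have h16 (x : K) := pow_sixteen_eq_self x
    have hid (x : K) : h' x ^ 5 = x ^ 5 := by
      rw [happly', ← pow_mul, mul_comm, pow_mul, hsq, ← pow_mul, ← pow_mul, mul_comm 5, pow_mul]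
      simp [h16]
    have hsquare (x : K) : h' x ^ 2 = h x := by rw [happly', ← pow_mul, h16]
    rcases eq_id_or_eq_pow_four_of_pow_five_eq (by simp [happly', h1]) hid with hσ | hσ
    · exact ⟨1, fun x => by simp [← hsquare, hσ]⟩
    · exact ⟨3, fun x => by simp [← hsquare, hσ, ← pow_mul]⟩

end Norm

end AdditiveMaps

/-! ### Designs and O'Nan configurations -/

section Designs

variable {P Q : Type*}

/-- The automorphism group of the incidence structure with point set `P` and block set `B`. Blocks
are moved by preimages, which for a permutation is equivalent to moving them by images. -/
def designAut (B : Set (Set P)) : Subgroup (Equiv.Perm P) where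
  carrier := {g | ∀ b, g ⁻¹' b ∈ B ↔ b ∈ B}
  one_mem' _ := Iff.rfl
  mul_mem' hg hh b := (hh _).trans (hg b)
  inv_mem' {g} hg b := by
    have hb : g ⁻¹' ((g⁻¹ : Equiv.Perm P) ⁻¹' b) = b := g.preimage_symm_preimage b
    rw [← hg, hb]

theorem preimage_mem_iff_of_mem_designAut {B : Set (Set P)} {g : Equiv.Perm P}
    (hg : g ∈ designAut B) (b : Set P) : g ⁻¹' b ∈ B ↔ b ∈ B :=
  hg b

theorem image_mem_of_mem_designAut {B : Set (Set P)} {g : Equiv.Perm P} (hg : g ∈ designAut B)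
    {b : Set P} (hb : b ∈ B) : g '' b ∈ B := by
  rwa [← preimage_mem_iff_of_mem_designAut hg, Set.preimage_image_eq b g.injective]

theorem mem_designAut_of_forall_preimage_mem [Finite P] {B : Set (Set P)} {g : Equiv.Perm P}
    (hg : ∀ b ∈ B, g ⁻¹' b ∈ B) : g ∈ designAut B := by
  have hsurj : Set.SurjOn (g ⁻¹' ·) B B :=
    (((Set.toFinite B).injOn_iff_bijOn_of_mapsTo hg).1
      g.surjective.preimage_injective.injOn).surjOn
  refine fun b => ⟨fun hb => ?_, hg b⟩
  obtain ⟨b', hb', h⟩ := hsurj hb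
  rwa [← g.surjective.preimage_injective h]

theorem forall_image_mem_iff_mem_designAut [Finite P] {B : Set (Set P)} {g : Equiv.Perm P} :
    (∀ b ∈ B, g '' b ∈ B) ↔ g ∈ designAut B := by
  refine ⟨fun h => ?_, fun h b => image_mem_of_mem_designAut h⟩
  rw [← inv_mem_iff]
  refine mem_designAut_of_forall_preimage_mem fun b hb => ?_
  have hb' : (g⁻¹ : Equiv.Perm P) ⁻¹' b = g '' b := (g.image_eq_preimage_symm b).symm
  rw [hb']
  exact h b hb

theorem card_image_preserving_eq_card_designAut [Finite P] {B : Set (Set P)} {B' : Set (Set Q)}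
    (e : P ≃ Q) (he : ∀ b, e '' b ∈ B' ↔ b ∈ B) :
    Nat.card {g : Equiv.Perm Q // ∀ b ∈ B', g '' b ∈ B'} = Nat.card (designAut B) := by
  refine (Nat.card_congr (e.permCongr.subtypeEquiv fun g => ?_)).symm
  have conj (b : Set P) : e.permCongr g '' (e '' b) = e '' (g '' b) := by
    simp only [Set.image_image, Equiv.permCongr_apply, Equiv.symm_apply_apply]
  have transport := e.surjective.image_surjective.forall
    (p := fun b => b ∈ B' → e.permCongr g '' b ∈ B')
  simp only [conj, he] at transport
  rw [← forall_image_mem_iff_mem_designAut, transport]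

/-- A point of an O'Nan configuration: four blocks `b₁, b₂, b₃, b₄` meeting pairwise in six
distinct points, the given one being the intersection of `b₁` and `b₂`. -/
def IsONanVertex (B : Set (Set P)) (p : P) : Prop :=
  ∃ b₁ ∈ B, ∃ b₂ ∈ B, ∃ b₃ ∈ B, ∃ b₄ ∈ B, ∃ p₁₃ p₁₄ p₂₃ p₂₄ p₃₄ : P,
    [b₁, b₂, b₃, b₄].Nodup ∧ [p, p₁₃, p₁₄, p₂₃, p₂₄, p₃₄].Nodup ∧
    {p, p₁₃, p₁₄} ⊆ b₁ ∧ {p, p₂₃, p₂₄} ⊆ b₂ ∧ {p₁₃, p₂₃, p₃₄} ⊆ b₃ ∧ {p₁₄, p₂₄, p₃₄} ⊆ b₄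

theorem IsONanVertex.map {B : Set (Set P)} {B' : Set (Set Q)} {p : P} (h : IsONanVertex B p)
    {f : P → Q} (hf : Function.Injective f) (hB : ∀ b ∈ B, f '' b ∈ B') :
    IsONanVertex B' (f p) := by
  obtain ⟨b₁, h₁, b₂, h₂, b₃, h₃, b₄, h₄, p₁₃, p₁₄, p₂₃, p₂₄, p₃₄, hb, hp, h⟩ := h
  refine ⟨f '' b₁, hB _ h₁, f '' b₂, hB _ h₂, f '' b₃, hB _ h₃, f '' b₄, hB _ h₄,
    f p₁₃, f p₁₄, f p₂₃, f p₂₄, f p₃₄, hb.map hf.image_injective, hp.map hf, ?_⟩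
  simpa only [Set.insert_subset_iff, Set.singleton_subset_iff, hf.mem_set_image] using h

theorem isONanVertex_apply_iff {B : Set (Set P)} {g : Equiv.Perm P} (hg : g ∈ designAut B)
    {p : P} :
    IsONanVertex B (g p) ↔ IsONanVertex B p := by
  refine ⟨fun h => ?_, fun h => h.map g.injective fun b => image_mem_of_mem_designAut hg⟩
  simpa using h.map (g⁻¹).injective fun b => image_mem_of_mem_designAut (inv_mem hg)

end Designs

/-! ### The affine points of the unitals -/

section AffinePoints

variable {K : Type*} [Field K] [CharP K 2]

/-- The affine points `[x : y : 1]` of the unital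
`U_α = {[0 : 1 : 0]} ∪ {[x : y : 1] | y + y ^ 4 = quadForm α x}`. -/
@[ext]
structure AffinePoint (α : K) where
  x : K
  y : K
  relTrace_y : relTrace y = quadForm α x

namespace AffinePoint

variable {α : K}

/-- The points `p`, `q`, `r` lie on a common line `y = m x + k` of the affine plane. -/
def OnSecant (p q r : AffinePoint α) : Prop :=
  ∃ m k, p.y = m * p.x + k ∧ q.y = m * q.x + k ∧ r.y = m * r.x + k

theorem quadForm_add_eq {p q : AffinePoint α} {m k : K} (hp : p.y = m * p.x + k)
    (hq : q.y = m * q.x + k) :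
    quadForm α (p.x + q.x) = altForm p.x (p.x + q.x) + relTrace (m * (p.x + q.x)) := by
  have hpt := p.relTrace_y
  have hqt := q.relTrace_y
  rw [hp, map_add] at hpt
  rw [hq, map_add] at hqt
  rw [quadForm_add, ← hpt, ← hqt, altForm_add_right, altForm_self, mul_add, map_add]
  grind

theorem ext_of_mem_secant {p q : AffinePoint α} {m k : K} (hp : p.y = m * p.x + k)
    (hq : q.y = m * q.x + k) (h : p.x = q.x) : p = q :=
  AffinePoint.ext h (by rw [hp, hq, h])

theorem altForm_ne_zero_of_onSecant (hα : IsAnisotropic α) {p q r : AffinePoint α}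
    (h : OnSecant p q r) (hpq : p ≠ q) (hpr : p ≠ r) (hqr : q ≠ r) :
    altForm (p.x + q.x) (p.x + r.x) ≠ 0 := by
  obtain ⟨m, k, hp, hq, hr⟩ := h
  intro hzero
  have hu : p.x + q.x ≠ 0 := mt CharTwo.add_eq_zero.1 (mt (ext_of_mem_secant hp hq) hpq)
  have hv : p.x + r.x ≠ 0 := mt CharTwo.add_eq_zero.1 (mt (ext_of_mem_secant hp hr) hpr)
  obtain ⟨t, ht, htu⟩ := exists_eq_mul_of_altForm_eq_zero hu hzero
  have hquad : t ^ 2 * quadForm α (p.x + q.x) = t * quadForm α (p.x + q.x) := by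
    rw [← quadForm_mul ht, ← htu, quadForm_add_eq hp hr, quadForm_add_eq hp hq, htu,
      altForm_mul_right ht, mul_left_comm, relTrace_mul_of_pow_four_eq ht, ← mul_add]
  have ht' : t = 0 ∨ t = 1 := by grind [mt (hα _) hu]
  rcases ht' with rfl | rfl
  · exact hv (by rw [htu, zero_mul])
  · exact hqr (ext_of_mem_secant hq hr (by grind))

theorem exists_mem_secant {p q : AffinePoint α} (h : p.x ≠ q.x) :
    ∃ m k, p.y = m * p.x + k ∧ q.y = m * q.x + k := by
  refine ⟨(p.y - q.y) / (p.x - q.x), p.y - (p.y - q.y) / (p.x - q.x) * p.x, by ring, ?_⟩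
  have := sub_ne_zero.2 h
  field_simp
  ring

instance [Finite K] : Finite (AffinePoint α) :=
  Finite.of_injective (fun p => (p.x, p.y)) fun _ _ h =>
    AffinePoint.ext (Prod.ext_iff.1 h).1 (Prod.ext_iff.1 h).2

instance : One (AffinePoint α) where
  one := ⟨0, 0, by rw [map_zero, quadForm_zero]⟩

theorem one_x : (1 : AffinePoint α).x = 0 := rfl
theorem one_y : (1 : AffinePoint α).y = 0 := rfl

variable [Fact (Nat.card K = 16)]

theorem exists_x_eq (α x : K) : ∃ p : AffinePoint α, p.x = x :=
  let ⟨y, hy⟩ := exists_relTrace_eq (quadForm_pow_four α x)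
  ⟨⟨x, y, hy⟩, rfl⟩

theorem exists_onSecant (p : AffinePoint α) {x₁ x₂ : K} (h : altForm (p.x + x₁) (p.x + x₂) ≠ 0) :
    ∃ q r : AffinePoint α, q.x = x₁ ∧ r.x = x₂ ∧ OnSecant p q r := by
  have fixed (u v w : K) : (quadForm α u + altForm v w) ^ 4 = quadForm α u + altForm v w :=
    pow_four_add_eq_self (quadForm_pow_four α u) (altForm_pow_four v w)
  obtain ⟨m, hm₁, hm₂⟩ := exists_relTrace_mul_eq h (fixed (p.x + x₁) p.x (p.x + x₁))
    (fixed (p.x + x₂) p.x (p.x + x₂))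
  have point {x : K} (hx : relTrace (m * (p.x + x)) =
      quadForm α (p.x + x) + altForm p.x (p.x + x)) :
      relTrace (m * x + (p.y + m * p.x)) = quadForm α x := by
    have hsum : m * x + (p.y + m * p.x) = m * (p.x + x) + p.y := by ring
    have hquad : quadForm α x = quadForm α p.x + quadForm α (p.x + x) + altForm p.x (p.x + x) := by
      rw [← quadForm_add, ← add_assoc, CharTwo.add_self_eq_zero, zero_add]
    rw [hsum, map_add, hx, p.relTrace_y, hquad]
    ring
  exact ⟨⟨x₁, _, point hm₁⟩, ⟨x₂, _, point hm₂⟩, rfl, rfl, m, p.y + m * p.x, by grind, rfl, rfl⟩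

/-- The affine points form a group of Heisenberg type, whose left translations are elations of the
plane: they permute the lines `y = m x + k`. -/
instance : Mul (AffinePoint α) where
  mul p q :=
    { x := p.x + q.x
      y := p.y + p.x ^ 4 * q.x + q.y
      relTrace_y := by
        rw [map_add, map_add, p.relTrace_y, q.relTrace_y, quadForm_add, altForm_eq_relTrace]
        ring }

instance : Inv (AffinePoint α) where
  inv p := ⟨p.x, p.y + p.x ^ 5, by
    have : relTrace (p.x ^ 5) = 0 := by
      grind [relTrace_eq_zero_iff, pow_sixteen_eq_self p.x]
    rw [map_add, this, add_zero, p.relTrace_y]⟩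

theorem mul_x (p q : AffinePoint α) : (p * q).x = p.x + q.x := rfl
theorem mul_y (p q : AffinePoint α) : (p * q).y = p.y + p.x ^ 4 * q.x + q.y := rfl
theorem inv_x (p : AffinePoint α) : p⁻¹.x = p.x := rfl
theorem inv_y (p : AffinePoint α) : p⁻¹.y = p.y + p.x ^ 5 := rfl

instance : Group (AffinePoint α) :=
  Group.ofLeftAxioms
    (fun _ _ _ => AffinePoint.ext (add_assoc _ _ _) (by simp only [mul_x, mul_y]; grind))
    (fun p => AffinePoint.ext (zero_add _) (by simp only [mul_y, one_x, one_y]; grind))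
    (fun p => AffinePoint.ext (CharTwo.add_self_eq_zero _)
      (by simp only [mul_y, one_y, inv_x, inv_y]; grind))

theorem mul_self_x (p : AffinePoint α) : (p * p).x = 0 := CharTwo.add_self_eq_zero _

theorem mul_self_y (p : AffinePoint α) : (p * p).y = p.x ^ 5 := by
  rw [mul_y]
  grind

theorem mul_self_mul_mul_self_y (p q : AffinePoint α) :
    (p * p * (q * q)).y = p.x ^ 5 + q.x ^ 5 := by
  rw [mul_y, mul_self_x q, mul_self_y, mul_self_y, mul_zero, add_zero]

theorem ncard_x_eq (α x₀ : K) : {p : AffinePoint α | p.x = x₀}.ncard = 4 := by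
  rw [← ncard_relTrace_eq (quadForm_pow_four α x₀)]
  refine Set.ncard_congr (fun p _ => p.y) ?_ ?_ ?_
  · rintro p rfl
    exact p.relTrace_y
  · rintro p q hp rfl hy
    exact AffinePoint.ext hp hy
  · exact fun y hy => ⟨⟨x₀, y, hy⟩, rfl, rfl⟩

theorem ncard_line (hα : IsAnisotropic α) (m k : K) :
    {p : AffinePoint α | p.y = m * p.x + k}.ncard = 1 ∨
      {p : AffinePoint α | p.y = m * p.x + k}.ncard = 5 := by
  set c := quadForm α (m ^ 4) + relTrace k
  have hc4 : c ^ 4 = c :=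
    pow_four_add_eq_self (quadForm_pow_four α (m ^ 4)) (relTrace_pow_four k)
  have on_line (x : K) : relTrace (m * x + k) = quadForm α x ↔ quadForm α (m ^ 4 + x) = c := by
    have hslope : altForm (m ^ 4) x = relTrace (m * x) := by
      rw [altForm_eq_relTrace, ← pow_mul, pow_sixteen_eq_self]
    rw [quadForm_add, hslope, map_add]
    grind
  have hcard : {p : AffinePoint α | p.y = m * p.x + k}.ncard = {x | quadForm α x = c}.ncard := by
    refine Set.ncard_congr (fun p _ => m ^ 4 + p.x) ?_ ?_ ?_
    · exact fun p hp => (on_line p.x).1 (hp ▸ p.relTrace_y)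
    · exact fun p q hp hq hx => ext_of_mem_secant hp hq (add_left_cancel hx)
    · intro z hz
      refine ⟨⟨m ^ 4 + z, m * (m ^ 4 + z) + k, (on_line _).2 ?_⟩, rfl, ?_⟩
      · rwa [CharTwo.add_cancel_left]
      · exact CharTwo.add_cancel_left _ _
  rw [hcard]
  rcases eq_or_ne c 0 with h0 | h0
  · exact .inl (h0 ▸ ncard_quadForm_eq_zero hα)
  · exact .inr (ncard_quadForm_eq hα h0 hc4)

theorem card_affinePoint (α : K) : Nat.card (AffinePoint α) = 64 := by
  have := Fintype.ofFinite K
  have e : AffinePoint α ≃ Σ x₀ : K, {p : AffinePoint α | p.x = x₀} :=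
    (Equiv.sigmaFiberEquiv AffinePoint.x).symm
  simp only [Nat.card_congr e, Nat.card_sigma, Nat.card_coe_set_eq, ncard_x_eq,
    Finset.sum_const, Finset.card_univ, Fintype.card_eq_nat_card, Fact.out (p := Nat.card K = 16),
    smul_eq_mul]

end AffinePoint

end AffinePoints

/-! ### Blocks and the evident automorphisms -/

section Blocks

variable {K : Type*} [Field K] [CharP K 2]

/-- The points of the unital on the line `x = x₀`, which passes through the point `none` at
infinity. -/
def verticalBlock (α x₀ : K) : Set (Option (AffinePoint α)) :=
  insert none (some '' {p | p.x = x₀})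

/-- The points of the unital on the line `y = m x + k`. -/
def slopedSection (α m k : K) : Set (Option (AffinePoint α)) :=
  some '' {p | p.y = m * p.x + k}

/-- The intersections of the unital with the lines other than the line at infinity. -/
def lineSections (α : K) : Set (Set (Option (AffinePoint α))) :=
  {b | (∃ x₀, b = verticalBlock α x₀) ∨ ∃ m k, b = slopedSection α m k}

/-- The blocks of the unital: the line sections that are not tangent. -/
def blocks (α : K) : Set (Set (Option (AffinePoint α))) :=
  {b ∈ lineSections α | b.Nontrivial}

variable {α : K}

theorem none_mem_verticalBlock {x₀ : K} : none ∈ verticalBlock α x₀ := Set.mem_insert _ _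

theorem some_mem_verticalBlock {p : AffinePoint α} {x₀ : K} :
    some p ∈ verticalBlock α x₀ ↔ p.x = x₀ := by
  simp [verticalBlock]

theorem none_notMem_slopedSection {m k : K} : none ∉ slopedSection α m k := by
  simp [slopedSection]

theorem some_mem_slopedSection {p : AffinePoint α} {m k : K} :
    some p ∈ slopedSection α m k ↔ p.y = m * p.x + k := by
  simp [slopedSection]

theorem verticalBlock_mem_lineSections (x₀ : K) : verticalBlock α x₀ ∈ lineSections α :=
  .inl ⟨x₀, rfl⟩

theorem slopedSection_mem_lineSections (m k : K) : slopedSection α m k ∈ lineSections α :=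
  .inr ⟨m, k, rfl⟩

theorem slopedSection_mem_blocks {p q : AffinePoint α} {m k : K} (hp : p.y = m * p.x + k)
    (hq : q.y = m * q.x + k) (hpq : p ≠ q) : slopedSection α m k ∈ blocks α :=
  ⟨slopedSection_mem_lineSections m k, some p, some_mem_slopedSection.2 hp, some q,
    some_mem_slopedSection.2 hq, by simpa using hpq⟩

theorem slopedSection_ne_verticalBlock {m k x₀ : K} : slopedSection α m k ≠ verticalBlock α x₀ :=
  fun h => none_notMem_slopedSection (h ▸ none_mem_verticalBlock)

theorem slopedSection_ne {m k m' k' : K} (p : AffinePoint α) (hp : p.y = m * p.x + k)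
    (hp' : p.y ≠ m' * p.x + k') : slopedSection α m k ≠ slopedSection α m' k' :=
  ne_of_mem_of_not_mem' (some_mem_slopedSection.2 hp) (mt some_mem_slopedSection.1 hp')

theorem mem_designAut_of_forall_preimage_mem_lineSections [Finite K]
    {g : Equiv.Perm (Option (AffinePoint α))}
    (hv : ∀ x₀, g ⁻¹' verticalBlock α x₀ ∈ lineSections α)
    (hs : ∀ m k, (slopedSection α m k).Nontrivial → g ⁻¹' slopedSection α m k ∈ lineSections α) :
    g ∈ designAut (blocks α) := by
  refine mem_designAut_of_forall_preimage_mem ?_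
  rintro _ ⟨⟨x₀, rfl⟩ | ⟨m, k, rfl⟩, hb⟩
  · exact ⟨hv x₀, hb.preimage g.surjective⟩
  · exact ⟨hs m k hb, hb.preimage g.surjective⟩

/-- The automorphisms of the design that fix the point at infinity, as permutations of the affine
points. -/
def affineAut (α : K) : Subgroup (Equiv.Perm (AffinePoint α)) where
  carrier := {f | f.optionCongr ∈ designAut (blocks α)}
  one_mem' := by
    have hone : (1 : Equiv.Perm (AffinePoint α)).optionCongr = 1 := Equiv.optionCongr_refl
    rw [Set.mem_ofPred_eq, hone]
    exact one_mem _
  mul_mem' {f g} hf hg := by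
    rw [Set.mem_ofPred_eq] at *
    have hmul : (f * g).optionCongr = f.optionCongr * g.optionCongr :=
      Equiv.ext fun p => by cases p <;> rfl
    rw [hmul]
    exact mul_mem hf hg
  inv_mem' {f} hf := by
    rw [Set.mem_ofPred_eq] at *
    have hinv : (f⁻¹).optionCongr = f.optionCongr⁻¹ := (Equiv.optionCongr_symm f).symm
    rw [hinv]
    exact inv_mem hf

theorem optionCongr_mem_designAut_iff {f : Equiv.Perm (AffinePoint α)} :
    f.optionCongr ∈ designAut (blocks α) ↔ f ∈ affineAut α :=
  Iff.rfl

theorem exists_optionCongr_eq {g : Equiv.Perm (Option (AffinePoint α))}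
    (hg : g ∈ designAut (blocks α)) (hnone : g none = none) :
    ∃ f ∈ affineAut α, f.optionCongr = g := by
  have hcongr : (Equiv.removeNone g).optionCongr = g := by
    ext1 p
    rcases p with _ | p
    · simp [hnone]
    · have hp : ∃ q, g (some p) = some q :=
        Option.ne_none_iff_exists'.1 fun h => by simpa using g.injective (h.trans hnone.symm)
      simp [Equiv.removeNone_some g hp]
  exact ⟨_, optionCongr_mem_designAut_iff.1 (hcongr.symm ▸ hg), hcongr⟩

theorem mem_affineAut_of_forall [Finite K] {f : Equiv.Perm (AffinePoint α)}
    (hv : ∀ x₀, ∃ x₁, ∀ p, (f p).x = x₀ ↔ p.x = x₁)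
    (hs : ∀ m k, ∃ m' k', ∀ p, (f p).y = m * (f p).x + k ↔ p.y = m' * p.x + k') :
    f ∈ affineAut α := by
  refine optionCongr_mem_designAut_iff.1
    (mem_designAut_of_forall_preimage_mem_lineSections (fun x₀ => ?_) fun m k _ => ?_)
  · obtain ⟨x₁, h⟩ := hv x₀
    refine .inl ⟨x₁, Set.ext ?_⟩
    rintro (_ | p)
    · simp [none_mem_verticalBlock]
    · simp [some_mem_verticalBlock, h]
  · obtain ⟨m', k', h⟩ := hs m k
    refine .inr ⟨m', k', Set.ext ?_⟩
    rintro (_ | p)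
    · simp [none_notMem_slopedSection]
    · simp [some_mem_slopedSection, h]

theorem onSecant_iff {p q r : AffinePoint α} :
    p.OnSecant q r ↔ (p = q ∧ p = r) ∨
      ∃ b ∈ blocks α, none ∉ b ∧ some p ∈ b ∧ some q ∈ b ∧ some r ∈ b := by
  constructor
  · rintro ⟨m, k, hp, hq, hr⟩
    rw [or_iff_not_imp_left]
    intro hne
    have hp' := some_mem_slopedSection.2 hp
    have hq' := some_mem_slopedSection.2 hq
    have hr' := some_mem_slopedSection.2 hr
    refine ⟨slopedSection α m k, ⟨slopedSection_mem_lineSections m k, ?_⟩,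
      none_notMem_slopedSection, hp', hq', hr'⟩
    rcases not_and_or.1 hne with h | h
    · exact ⟨_, hp', _, hq', by simpa using h⟩
    · exact ⟨_, hp', _, hr', by simpa using h⟩
  · rintro (⟨rfl, rfl⟩ | ⟨b, ⟨⟨x₀, rfl⟩ | ⟨m, k, rfl⟩, -⟩, hnone, hp, hq, hr⟩)
    · exact ⟨0, p.y, by simp, by simp, by simp⟩
    · exact absurd none_mem_verticalBlock hnone
    · exact ⟨m, k, some_mem_slopedSection.1 hp, some_mem_slopedSection.1 hq,
        some_mem_slopedSection.1 hr⟩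

theorem onSecant_apply_iff {f : Equiv.Perm (AffinePoint α)} (hf : f ∈ affineAut α)
    {p q r : AffinePoint α} : (f p).OnSecant (f q) (f r) ↔ p.OnSecant q r := by
  rw [onSecant_iff, iff_comm, onSecant_iff, f.optionCongr.injective.preimage_surjective.exists]
  simp only [f.injective.eq_iff,
    preimage_mem_iff_of_mem_designAut (optionCongr_mem_designAut_iff.2 hf), Set.mem_preimage,
    Equiv.optionCongr_apply, Option.map_none, Option.map_some]

variable [Fact (Nat.card K = 16)]

theorem verticalBlock_mem_blocks (x₀ : K) : verticalBlock α x₀ ∈ blocks α := by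
  obtain ⟨p, hp⟩ := AffinePoint.exists_x_eq α x₀
  exact ⟨verticalBlock_mem_lineSections x₀, none, none_mem_verticalBlock, some p,
    some_mem_verticalBlock.2 hp, (Option.some_ne_none p).symm⟩

theorem x_eq_iff {p q : AffinePoint α} :
    p.x = q.x ↔ ∃ b ∈ blocks α, none ∈ b ∧ some p ∈ b ∧ some q ∈ b := by
  constructor
  · intro h
    exact ⟨_, verticalBlock_mem_blocks q.x, none_mem_verticalBlock, some_mem_verticalBlock.2 h,
      some_mem_verticalBlock.2 rfl⟩
  · rintro ⟨b, ⟨⟨x₀, rfl⟩ | ⟨m, k, rfl⟩, -⟩, hnone, hp, hq⟩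
    · exact (some_mem_verticalBlock.1 hp).trans (some_mem_verticalBlock.1 hq).symm
    · exact absurd hnone none_notMem_slopedSection

theorem x_apply_eq_iff {f : Equiv.Perm (AffinePoint α)} (hf : f ∈ affineAut α)
    {p q : AffinePoint α} : (f p).x = (f q).x ↔ p.x = q.x := by
  rw [x_eq_iff, iff_comm, x_eq_iff, f.optionCongr.injective.preimage_surjective.exists]
  simp only [preimage_mem_iff_of_mem_designAut (optionCongr_mem_designAut_iff.2 hf),
    Set.mem_preimage, Equiv.optionCongr_apply, Option.map_none, Option.map_some]

theorem mulLeft_mem_affineAut (p : AffinePoint α) : Equiv.mulLeft p ∈ affineAut α := by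
  refine mem_affineAut_of_forall (fun x₀ => ⟨p.x + x₀, fun q => ?_⟩)
    fun m k => ⟨m + p.x ^ 4, m * p.x + k + p.y, fun q => ?_⟩
  · rw [Equiv.coe_mulLeft, AffinePoint.mul_x]
    grind
  · rw [Equiv.coe_mulLeft, AffinePoint.mul_x, AffinePoint.mul_y]
    grind

theorem relTrace_semilinear (c : K) (σ : K ≃+* K) (p : AffinePoint α) :
    relTrace (c ^ 5 * σ p.y) =
      quadForm α (c * σ p.x) + relTrace ((α * c ^ 2 + c ^ 5 * σ α) * σ p.x ^ 2) := by
  have hc : (c ^ 5) ^ 4 = c ^ 5 := by grind [pow_sixteen_eq_self c]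
  have hσ := congrArg σ p.relTrace_y
  rw [relTrace_mul_of_pow_four_eq hc]
  simp only [quadForm, relTrace_apply, map_add, map_mul, map_pow] at hσ ⊢
  rw [hσ]
  grind

/-- The semilinear maps `(x, y) ↦ (c σ(x), c ^ 5 σ(y))` that preserve the unital. -/
abbrev Semilinear (α : K) := {s : K × (K ≃+* K) // s.1 ≠ 0 ∧ s.1 ^ 3 * s.2 α = α}

namespace Semilinear

/-- The action of a semilinear map on the affine points of the unital. -/
def toPerm (s : Semilinear α) : Equiv.Perm (AffinePoint α) :=
  Equiv.ofBijective
    (fun p =>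
      { x := s.1.1 * s.1.2 p.x
        y := s.1.1 ^ 5 * s.1.2 p.y
        relTrace_y := by
          rw [relTrace_semilinear]
          have hα : α * s.1.1 ^ 2 + s.1.1 ^ 5 * s.1.2 α = 0 := by grind
          rw [hα, zero_mul, map_zero, add_zero] })
    (Finite.injective_iff_bijective.1 fun p q h => by
      have hx := congrArg AffinePoint.x h
      have hy := congrArg AffinePoint.y h
      simp only [mul_eq_mul_left_iff, EmbeddingLike.apply_eq_iff_eq, pow_eq_zero_iff,
        s.2.1, or_false, ne_eq, OfNat.ofNat_ne_zero, not_false_eq_true] at hx hy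
      exact AffinePoint.ext hx hy)

theorem toPerm_x (s : Semilinear α) (p : AffinePoint α) : (s.toPerm p).x = s.1.1 * s.1.2 p.x := rfl
theorem toPerm_y (s : Semilinear α) (p : AffinePoint α) :
    (s.toPerm p).y = s.1.1 ^ 5 * s.1.2 p.y := rfl

theorem toPerm_one (s : Semilinear α) : s.toPerm 1 = 1 :=
  AffinePoint.ext (by rw [toPerm_x, AffinePoint.one_x, map_zero, mul_zero])
    (by rw [toPerm_y, AffinePoint.one_y, map_zero, mul_zero])

theorem toPerm_mem_affineAut (s : Semilinear α) : s.toPerm ∈ affineAut α := by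
  obtain ⟨⟨c, σ⟩, hc, hα⟩ := s
  refine mem_affineAut_of_forall (fun x₀ => ⟨σ.symm (c⁻¹ * x₀), fun p => ?_⟩)
    fun m k => ⟨σ.symm (m * (c ^ 4)⁻¹), σ.symm (k * (c ^ 5)⁻¹), fun p => ?_⟩
  · rw [toPerm_x, ← σ.injective.eq_iff (a := p.x), σ.apply_symm_apply, eq_inv_mul_iff_mul_eq₀ hc]
  · rw [toPerm_y, toPerm_x, ← σ.injective.eq_iff (a := p.y), map_add, map_mul, σ.apply_symm_apply,
      σ.apply_symm_apply]
    grind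

theorem toPerm_injective : Function.Injective (toPerm (α := α)) := by
  intro s t h
  have hx (x : K) : s.1.1 * s.1.2 x = t.1.1 * t.1.2 x := by
    obtain ⟨p, rfl⟩ := AffinePoint.exists_x_eq α x
    rw [← toPerm_x, h, toPerm_x]
  have hc : s.1.1 = t.1.1 := by simpa using hx 1
  refine Subtype.ext (Prod.ext hc (RingEquiv.ext fun x => ?_))
  exact mul_left_cancel₀ s.2.1 ((hx x).trans (by rw [hc]))

end Semilinear

end Blocks

/-! ### The stabilizer of the point at infinity -/

section ActionOnAbscissae

variable {K : Type*} [Field K] [CharP K 2] {α : K}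

theorem y_add_y_eq_of_onSecant (hα : IsAnisotropic α) {f g : Equiv.Perm (AffinePoint α)}
    (hf : f ∈ affineAut α) (hg : g ∈ affineAut α) (hx : ∀ p, (f p).x = (g p).x)
    {p q r : AffinePoint α} (h : p.OnSecant q r) (hpq : p ≠ q) (hpr : p ≠ r) (hqr : q ≠ r) :
    (f p).y + (g p).y = (f q).y + (g q).y := by
  have hf_line := (onSecant_apply_iff hf).2 h
  have hindep := AffinePoint.altForm_ne_zero_of_onSecant hα hf_line (f.injective.ne hpq)
    (f.injective.ne hpr) (f.injective.ne hqr)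
  obtain ⟨m, k, hp, hq, hr⟩ := hf_line
  obtain ⟨m', k', hp', hq', hr'⟩ := (onSecant_apply_iff hg).2 h
  simp only [← hx] at hp' hq' hr'
  have trace_eq_zero {s : AffinePoint α} (hs : (f s).y = m * (f s).x + k)
      (hs' : (g s).y = m' * (f s).x + k') : relTrace ((m + m') * ((f p).x + (f s).x)) = 0 := by
    have hsum : (m + m') * ((f p).x + (f s).x) = (f p).y + (g p).y + ((f s).y + (g s).y) := by
      rw [hp, hp', hs, hs']
      grind
    rw [hsum, map_add, map_add, map_add]
    simp only [AffinePoint.relTrace_y, hx, CharTwo.add_self_eq_zero]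
  have hslope : m + m' = 0 :=
    eq_zero_of_relTrace_mul_eq_zero hindep (trace_eq_zero hq hq') (trace_eq_zero hr hr')
  grind

variable [Fact (Nat.card K = 16)]

namespace AffinePoint

theorem exists_onSecant_ne (hα : IsAnisotropic α) {p q : AffinePoint α} (h : p.x ≠ q.x) :
    ∃ r, p ≠ r ∧ q ≠ r ∧ OnSecant p q r := by
  obtain ⟨m, k, hp, hq⟩ := exists_mem_secant h
  have hpq : ({p, q} : Set (AffinePoint α)).ncard = 2 := Set.ncard_pair (mt (congrArg x) h)
  have hsub : {p, q} ⊆ {r : AffinePoint α | r.y = m * r.x + k} := Set.pair_subset hp hq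
  have hlt : ({p, q} : Set (AffinePoint α)).ncard <
      {r : AffinePoint α | r.y = m * r.x + k}.ncard := by
    have hle := Set.ncard_le_ncard hsub
    rcases ncard_line hα m k with h1 | h5 <;> omega
  obtain ⟨r, hr, hrpq⟩ := Set.exists_mem_notMem_of_ncard_lt_ncard hlt
  rw [Set.mem_insert_iff, Set.mem_singleton_iff, not_or] at hrpq
  exact ⟨r, Ne.symm hrpq.1, Ne.symm hrpq.2, m, k, hp, hq, hr⟩

end AffinePoint

theorem eq_of_x_eq (hα : IsAnisotropic α) {f g : Equiv.Perm (AffinePoint α)}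
    (hf : f ∈ affineAut α) (hg : g ∈ affineAut α) (hx : ∀ p, (f p).x = (g p).x)
    {p₀ : AffinePoint α} (h₀ : f p₀ = g p₀) : f = g := by
  have constant_of_ne {p q : AffinePoint α} (h : p.x ≠ q.x) :
      (f p).y + (g p).y = (f q).y + (g q).y := by
    obtain ⟨r, hpr, hqr, hline⟩ := AffinePoint.exists_onSecant_ne hα h
    exact y_add_y_eq_of_onSecant hα hf hg hx hline (mt (congrArg _) h) hpr hqr
  have constant (p : AffinePoint α) : (f p).y + (g p).y = (f p₀).y + (g p₀).y := by
    rcases eq_or_ne p.x p₀.x with h | h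
    · obtain ⟨q, hq⟩ := AffinePoint.exists_x_eq α (p.x + 1)
      rw [constant_of_ne (p := p) (q := q) (by simp [hq]),
        constant_of_ne (p := q) (q := p₀) (by simp [hq, h])]
    · exact constant_of_ne h
  refine Equiv.ext fun p => AffinePoint.ext (hx p) ?_
  rw [← CharTwo.add_eq_zero, constant, h₀, CharTwo.add_self_eq_zero]

theorem altForm_apply_ne_zero (hα : IsAnisotropic α) {f : Equiv.Perm (AffinePoint α)}
    (hf : f ∈ affineAut α) {p q r : AffinePoint α} (h : altForm (p.x + q.x) (p.x + r.x) ≠ 0) :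
    altForm ((f p).x + (f q).x) ((f p).x + (f r).x) ≠ 0 := by
  obtain ⟨q', r', hq, hr, hline⟩ := AffinePoint.exists_onSecant p h
  rw [← hq, ← hr] at h
  rw [← (x_apply_eq_iff hf).2 hq, ← (x_apply_eq_iff hf).2 hr]
  refine AffinePoint.altForm_ne_zero_of_onSecant hα ((onSecant_apply_iff hf).2 hline)
    (f.injective.ne ?_) (f.injective.ne ?_) (f.injective.ne ?_)
  all_goals
    rintro rfl
    simp [altForm, CharTwo.add_self_eq_zero] at h
  grind

theorem altForm_apply_eq_zero_iff (hα : IsAnisotropic α) {f : Equiv.Perm (AffinePoint α)}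
    (hf : f ∈ affineAut α) {p q r : AffinePoint α} :
    altForm ((f p).x + (f q).x) ((f p).x + (f r).x) = 0 ↔
      altForm (p.x + q.x) (p.x + r.x) = 0 := by
  refine not_iff_not.1 ⟨fun h => ?_, altForm_apply_ne_zero hα hf⟩
  simpa using altForm_apply_ne_zero hα (inv_mem hf) h

theorem exists_perm_x_apply_eq {f : Equiv.Perm (AffinePoint α)} (hf : f ∈ affineAut α) :
    ∃ φ : Equiv.Perm K, ∀ p, (f p).x = φ p.x := by
  choose s hs using AffinePoint.exists_x_eq α
  have hinj : Function.Injective fun x => (f (s x)).x := fun x x' h => by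
    rw [← hs x, ← hs x', ← x_apply_eq_iff hf]
    exact h
  exact ⟨Equiv.ofBijective _ (Finite.injective_iff_bijective.1 hinj),
    fun p => (x_apply_eq_iff hf).2 (hs p.x).symm⟩

theorem exists_addMonoidHom_x_apply_eq (hα : IsAnisotropic α) {f : Equiv.Perm (AffinePoint α)}
    (hf : f ∈ affineAut α) (h1 : f 1 = 1) :
    ∃ φ : K →+ K, Function.Injective φ ∧ ∀ p, (f p).x = φ p.x := by
  obtain ⟨φ, hφ⟩ := exists_perm_x_apply_eq hf
  have h0 : φ 0 = 0 := by
    rw [← AffinePoint.one_x (α := α), ← hφ, h1]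
  have hadd := map_add_of_altForm_eq_zero_iff h0 fun x y z => by
    obtain ⟨p, rfl⟩ := AffinePoint.exists_x_eq α x
    obtain ⟨q, rfl⟩ := AffinePoint.exists_x_eq α y
    obtain ⟨r, rfl⟩ := AffinePoint.exists_x_eq α z
    simp only [← hφ]
    exact altForm_apply_eq_zero_iff hα hf
  exact ⟨AddMonoidHom.mk' φ hadd, φ.injective, hφ⟩

theorem apply_mul_of_mem_affineAut (hα : IsAnisotropic α) {f : Equiv.Perm (AffinePoint α)}
    (hf : f ∈ affineAut α) (h1 : f 1 = 1) (p q : AffinePoint α) : f (p * q) = f p * f q := by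
  obtain ⟨φ, -, hφ⟩ := exists_addMonoidHom_x_apply_eq hα hf h1
  have conjugate : f * Equiv.mulLeft p = Equiv.mulLeft (f p) * f := by
    refine eq_of_x_eq hα (mul_mem hf (mulLeft_mem_affineAut p))
      (mul_mem (mulLeft_mem_affineAut (f p)) hf) (p₀ := 1) (fun q => ?_) ?_
    · simp only [Equiv.Perm.mul_apply, Equiv.coe_mulLeft, hφ, AffinePoint.mul_x, map_add]
    · simp only [Equiv.Perm.mul_apply, Equiv.coe_mulLeft, h1, mul_one]
  exact congrArg (· q) conjugate

theorem exists_x_apply_eq_mul_ringEquiv (hα : IsAnisotropic α) {f : Equiv.Perm (AffinePoint α)}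
    (hf : f ∈ affineAut α) (h1 : f 1 = 1) :
    ∃ c ≠ 0, ∃ σ : K ≃+* K, ∀ p, (f p).x = c * σ p.x := by
  obtain ⟨φ, hinj, hφ⟩ := exists_addMonoidHom_x_apply_eq hα hf h1
  have hmul := apply_mul_of_mem_affineAut hα hf h1
  have hN : ∀ x y z, x ^ 5 + y ^ 5 = z ^ 5 → φ x ^ 5 + φ y ^ 5 = φ z ^ 5 := by
    intro x y z h
    obtain ⟨p, rfl⟩ := AffinePoint.exists_x_eq α x
    obtain ⟨q, rfl⟩ := AffinePoint.exists_x_eq α y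
    obtain ⟨r, rfl⟩ := AffinePoint.exists_x_eq α z
    have squares : p * p * (q * q) = r * r := by
      ext
      · rw [AffinePoint.mul_x, AffinePoint.mul_self_x, AffinePoint.mul_self_x,
          AffinePoint.mul_self_x, add_zero]
      · rw [AffinePoint.mul_self_mul_mul_self_y, AffinePoint.mul_self_y, h]
    rw [← hφ, ← hφ, ← hφ, ← AffinePoint.mul_self_mul_mul_self_y, ← AffinePoint.mul_self_y,
      ← hmul, ← hmul, ← hmul, ← hmul, squares]
  obtain ⟨σ, hσ⟩ := exists_ringEquiv_of_pow_five hinj hN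
  exact ⟨φ 1, by simp [map_eq_zero_iff φ hinj], σ, fun p => (hφ p).trans (hσ p.x)⟩

end ActionOnAbscissae

section Stabilizer

variable {K : Type*} [Field K] [CharP K 2] {α : K}

/-- The difference at `p` between the second coordinates of `f` and of the semilinear map
`(x, y) ↦ (c σ(x), c ^ 5 σ(y))`. -/
def defect (f : Equiv.Perm (AffinePoint α)) (c : K) (σ : K ≃+* K) (p : AffinePoint α) : K :=
  (f p).y + c ^ 5 * σ p.y

section

variable [Fact (Nat.card K = 16)] {f : Equiv.Perm (AffinePoint α)} {c : K} {σ : K ≃+* K}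

theorem defect_mul (hx : ∀ p, (f p).x = c * σ p.x) {p q : AffinePoint α}
    (hpq : f (p * q) = f p * f q) :
    defect f c σ (p * q) = defect f c σ p + defect f c σ q := by
  simp only [defect, hpq, AffinePoint.mul_y, hx, map_add, map_mul, map_pow]
  grind

theorem defect_eq_of_x_eq (hmul : ∀ p q, f (p * q) = f p * f q)
    (hx : ∀ p, (f p).x = c * σ p.x) {p q : AffinePoint α} (h : p.x = q.x) :
    defect f c σ p = defect f c σ q := by
  have hfix : (p.y + q.y) ^ 4 = p.y + q.y := by
    rw [← relTrace_eq_zero_iff, map_add, p.relTrace_y, q.relTrace_y, h, CharTwo.add_self_eq_zero]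
  obtain ⟨z, hz⟩ := exists_pow_five_eq hfix
  obtain ⟨s, rfl⟩ := AffinePoint.exists_x_eq α z
  have hq : q = p * (s * s) := by
    ext
    · rw [AffinePoint.mul_x, AffinePoint.mul_self_x, add_zero, h]
    · rw [AffinePoint.mul_y, AffinePoint.mul_self_x, AffinePoint.mul_self_y, hz]
      grind
  rw [hq, defect_mul hx (hmul p _), defect_mul hx (hmul s s), CharTwo.add_self_eq_zero, add_zero]

theorem defect_mul_comm_of_altForm_ne_zero (hf : f ∈ affineAut α)
    (hmul : ∀ p q, f (p * q) = f p * f q) (hx : ∀ p, (f p).x = c * σ p.x) {p q : AffinePoint α}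
    (h : altForm p.x q.x ≠ 0) : defect f c σ p * σ q.x = defect f c σ q * σ p.x := by
  have h1 : f 1 = 1 := by simpa using hmul 1 1
  obtain ⟨p', q', hp, hq, hline⟩ := AffinePoint.exists_onSecant (1 : AffinePoint α)
    (x₁ := p.x) (x₂ := q.x) (by simpa only [AffinePoint.one_x, zero_add] using h)
  obtain ⟨m, k, hm1, hmp, hmq⟩ := hline
  obtain ⟨m', k', hm1', hmp', hmq'⟩ := (onSecant_apply_iff hf).2 ⟨m, k, hm1, hmp, hmq⟩
  rw [h1] at hm1'
  simp only [AffinePoint.one_x, AffinePoint.one_y, mul_zero, zero_add] at hm1 hm1'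
  rw [← defect_eq_of_x_eq hmul hx hp, ← defect_eq_of_x_eq hmul hx hq, ← hp, ← hq, defect, defect,
    hmp', hmq', hmp, hmq, hx, hx, ← hm1, ← hm1']
  simp only [add_zero, map_mul]
  ring

theorem exists_defect_eq_mul (hf : f ∈ affineAut α)
    (hmul : ∀ p q, f (p * q) = f p * f q) (hx : ∀ p, (f p).x = c * σ p.x) :
    ∃ μ, ∀ p, defect f c σ p = μ * σ p.x := by
  obtain ⟨e, he⟩ := AffinePoint.exists_x_eq α 1
  have proportional {p q : AffinePoint α} (h : altForm p.x q.x ≠ 0) :=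
    defect_mul_comm_of_altForm_ne_zero hf hmul hx h
  refine ⟨defect f c σ e, fun p => ?_⟩
  rcases eq_or_ne p.x 0 with hp | hp
  · have hdefect : defect f c σ 1 = 0 := by
      simpa using defect_mul hx (hmul 1 1)
    rw [defect_eq_of_x_eq hmul hx (hp.trans AffinePoint.one_x.symm), hdefect, hp, map_zero,
      mul_zero]
  by_cases hep : altForm e.x p.x = 0
  · obtain ⟨v, hv⟩ := exists_altForm_ne_zero (he.trans_ne one_ne_zero)
    obtain ⟨q, rfl⟩ := AffinePoint.exists_x_eq α v
    have hpq := proportional (altForm_ne_zero_of_altForm_eq_zero hp hep hv)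
    have heq := proportional hv
    have hq : σ q.x ≠ 0 := by
      rw [Ne, map_eq_zero]
      rintro h
      simp [altForm, h] at hv
    rw [he, map_one, mul_one] at heq
    refine mul_right_cancel₀ hq ?_
    rw [hpq, ← heq]
    ring
  · have := proportional hep
    rwa [he, map_one, mul_one, eq_comm] at this

end

theorem relTrace_linear_eq_zero_of_forall {μ β ω : K} (hω : ω ^ 2 = ω + 1)
    (h : ∀ z, relTrace (μ * z) = relTrace (β * z ^ 2)) (z : K) : relTrace (β * z ^ 2) = 0 := by
  have hω4 : ω ^ 4 = ω := by grind
  have hz := h (ω * z)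
  have hz2 : β * (ω * z) ^ 2 = ω ^ 2 * (β * z ^ 2) := by ring
  rw [mul_left_comm, hz2, relTrace_mul_of_pow_four_eq hω4 (μ * z),
    relTrace_mul_of_pow_four_eq (t := ω ^ 2) (by grind), h, hω] at hz
  grind

variable [Fact (Nat.card K = 16)]

theorem eq_zero_of_relTrace_linear_eq_semilinear {μ β : K}
    (h : ∀ z, relTrace (μ * z) = relTrace (β * z ^ 2)) : β = 0 := by
  obtain ⟨ω, hω⟩ := exists_sq_eq_add_one K
  obtain ⟨v, hv⟩ := exists_altForm_ne_zero (one_ne_zero (α := K))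
  have hsq : altForm (1 ^ 2) (v ^ 2) = altForm 1 v ^ 2 := by
    grind [altForm]
  exact eq_zero_of_relTrace_mul_eq_zero (hsq ▸ pow_ne_zero 2 hv)
    (relTrace_linear_eq_zero_of_forall hω h 1) (relTrace_linear_eq_zero_of_forall hω h v)

theorem exists_semilinear_toPerm_eq (hα : IsAnisotropic α) {f : Equiv.Perm (AffinePoint α)}
    (hf : f ∈ affineAut α) (h1 : f 1 = 1) : ∃ s : Semilinear α, s.toPerm = f := by
  obtain ⟨c, hc, σ, hx⟩ := exists_x_apply_eq_mul_ringEquiv hα hf h1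
  obtain ⟨μ, hμ⟩ := exists_defect_eq_mul hf (apply_mul_of_mem_affineAut hα hf h1) hx
  have trace_eq (z : K) : relTrace (μ * z) = relTrace ((α * c ^ 2 + c ^ 5 * σ α) * z ^ 2) := by
    obtain ⟨p, hp⟩ := AffinePoint.exists_x_eq α (σ.symm z)
    have hz : σ p.x = z := by rw [hp, σ.apply_symm_apply]
    rw [← hz, ← hμ, defect, map_add, relTrace_semilinear, (f p).relTrace_y, hx,
      CharTwo.add_cancel_left]
  have hβ := eq_zero_of_relTrace_linear_eq_semilinear trace_eq
  have hcα : c ^ 3 * σ α = α := by grind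
  refine ⟨⟨(c, σ), hc, hcα⟩, eq_of_x_eq hα (Semilinear.toPerm_mem_affineAut _) hf (p₀ := 1)
    (fun p => (hx p).symm) ?_⟩
  rw [h1, Semilinear.toPerm_one]

theorem card_stabilizer_one (hα : IsAnisotropic α) :
    Nat.card (MulAction.stabilizer (affineAut α) (1 : AffinePoint α)) =
      Nat.card (Semilinear α) := by
  refine (Nat.card_eq_of_bijective
    (fun s : Semilinear α => ⟨⟨s.toPerm, s.toPerm_mem_affineAut⟩, s.toPerm_one⟩) ⟨?_, ?_⟩).symm
  · intro s t h
    exact Semilinear.toPerm_injective (congrArg (fun f => f.1.1) h)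
  · rintro ⟨⟨f, hf⟩, h1⟩
    obtain ⟨s, rfl⟩ := exists_semilinear_toPerm_eq hα hf h1
    exact ⟨s, rfl⟩

variable (K) in
theorem card_ringAut : Nat.card (K ≃+* K) = 4 := by
  let := ZMod.algebra K 2
  have hrank : Module.finrank (ZMod 2) K = 4 := by
    have hcard := Module.natCard_eq_pow_finrank (K := ZMod 2) (V := K)
    rw [Fact.out (p := Nat.card K = 16), Nat.card_zmod] at hcard
    exact Nat.pow_right_injective le_rfl (hcard.symm.trans (by norm_num))
  rw [← hrank, ← IsGalois.card_aut_eq_finrank]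
  exact Nat.card_congr
    { toFun σ := AlgEquiv.ofRingEquiv (f := σ) fun t =>
        RingHom.congr_fun (RingHom.ext_zmod ((σ : K →+* K).comp (algebraMap (ZMod 2) K)) _) t
      invFun σ := σ.toRingEquiv }

theorem card_semilinear (h : ∀ σ : K ≃+* K, σ α = α) :
    Nat.card (Semilinear α) = {c : K | c ≠ 0 ∧ c ^ 3 * α = α}.ncard * 4 := by
  rw [← Nat.card_coe_set_eq, ← card_ringAut K, ← Nat.card_prod]
  exact Nat.card_congr
    { toFun s := (⟨s.1.1, s.2.1, by simpa only [h] using s.2.2⟩, s.1.2)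
      invFun s := ⟨(s.1.1, s.2), s.1.2.1, by simpa only [h] using s.1.2.2⟩ }

variable (K) in
theorem card_semilinear_zero : Nat.card (Semilinear (0 : K)) = 60 := by
  rw [card_semilinear fun σ => map_zero σ]
  have hset : {c : K | c ≠ 0 ∧ c ^ 3 * 0 = 0} = {0}ᶜ := by
    ext c
    simp
  rw [hset, Set.ncard_compl, Set.ncard_singleton, Fact.out (p := Nat.card K = 16)]

variable (K) in
theorem card_semilinear_one : Nat.card (Semilinear (1 : K)) = 12 := by
  obtain ⟨ω, hω⟩ := exists_sq_eq_add_one K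
  rw [card_semilinear fun σ => map_one σ]
  have hset : {c : K | c ≠ 0 ∧ c ^ 3 * 1 = 1} = {t | t ^ 4 = t} \ {0} := by
    ext c
    simp only [Set.mem_ofPred_eq, Set.mem_sdiff, Set.mem_singleton_iff]
    grind
  rw [hset, Set.ncard_sdiff_singleton_of_mem (by simp), ncard_pow_four_eq_self hω]

end Stabilizer

/-! ### O'Nan configurations and the orders of the groups -/

section Orders

variable {K : Type*} [Field K] [CharP K 2] {α : K}

theorem exists_eq_verticalBlock {b : Set (Option (AffinePoint α))} (hb : b ∈ lineSections α)
    (h : none ∈ b) : ∃ x₀, b = verticalBlock α x₀ := by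
  rcases hb with hb | ⟨m, k, rfl⟩
  · exact hb
  · exact absurd h none_notMem_slopedSection

theorem exists_eq_slopedSection {b : Set (Option (AffinePoint α))} (hb : b ∈ lineSections α)
    {p : AffinePoint α} (hp : some p ∈ b) (hne : verticalBlock α p.x ≠ b) :
    ∃ m k, b = slopedSection α m k := by
  rcases hb with ⟨x₀, rfl⟩ | hb
  · exact absurd (congrArg _ (some_mem_verticalBlock.1 hp)) hne
  · exact hb

theorem slope_eq_and_intercept_eq_of_x_eq (hα : IsAnisotropic α) {p q p' q' r : AffinePoint α}
    {m k m' k' : K} (hp : p.y = m * p.x + k) (hq : q.y = m * q.x + k)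
    (hr : r.y = m * r.x + k) (hp' : p'.y = m' * p'.x + k') (hq' : q'.y = m' * q'.x + k')
    (hr' : r.y = m' * r.x + k') (hpp' : p'.x = p.x) (hqq' : q'.x = q.x) (hrp : r ≠ p)
    (hrq : r ≠ q) (hpq : p ≠ q) : m = m' ∧ k = k' := by
  have hindep := AffinePoint.altForm_ne_zero_of_onSecant hα ⟨m, k, hr, hp, hq⟩ hrp hrq hpq
  have trace_eq_zero {s s' : AffinePoint α} (hs : s.y = m * s.x + k) (hs' : s'.y = m' * s'.x + k')
      (hx : s'.x = s.x) : relTrace ((m + m') * (r.x + s.x)) = 0 := by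
    have hsum : (m + m') * (r.x + s.x) = s.y + s'.y := by grind
    rw [hsum, map_add, s.relTrace_y, s'.relTrace_y, hx, CharTwo.add_self_eq_zero]
  have hm := CharTwo.add_eq_zero.1 (eq_zero_of_relTrace_mul_eq_zero hindep
    (trace_eq_zero hp hp' hpp') (trace_eq_zero hq hq' hqq'))
  exact ⟨hm, add_left_cancel (a := m * r.x) (by rw [← hr, hr', hm])⟩

/-- Two blocks through the point at infinity are vertical, so the other two blocks of a
configuration would join a common point to points with the same abscissae. -/
theorem not_isONanVertex_none (hα : IsAnisotropic α) : ¬ IsONanVertex (blocks α) none := by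
  rintro ⟨b₁, ⟨h₁, -⟩, b₂, ⟨h₂, -⟩, b₃, ⟨h₃, -⟩, b₄, ⟨h₄, -⟩, p₁₃, p₁₄, p₂₃, p₂₄, p₃₄, hb, hp,
    hb₁, hb₂, hb₃, hb₄⟩
  simp only [List.nodup_cons, List.mem_cons, List.not_mem_nil, not_or, or_false, not_false_eq_true,
    List.nodup_nil, and_true, Set.insert_subset_iff, Set.singleton_subset_iff] at *
  obtain ⟨x₁, rfl⟩ := exists_eq_verticalBlock h₁ hb₁.1
  obtain ⟨x₂, rfl⟩ := exists_eq_verticalBlock h₂ hb₂.1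
  obtain ⟨⟨-, hne₁₃, hne₁₄⟩, ⟨hne₂₃, hne₂₄⟩, hne₃₄⟩ := hb
  rcases p₁₃ with _ | q₁₃
  · exact absurd hp (by simp)
  rcases p₁₄ with _ | q₁₄
  · exact absurd hp (by simp)
  rcases p₂₃ with _ | q₂₃
  · exact absurd hp (by simp)
  rcases p₂₄ with _ | q₂₄
  · exact absurd hp (by simp)
  rcases p₃₄ with _ | q₃₄
  · exact absurd hp (by simp)
  simp only [some_mem_verticalBlock] at hb₁ hb₂
  obtain ⟨m, k, rfl⟩ := exists_eq_slopedSection h₃ hb₃.1 (by rwa [hb₁.2.1])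
  obtain ⟨m', k', rfl⟩ := exists_eq_slopedSection h₄ hb₄.1 (by rwa [hb₁.2.2])
  simp only [some_mem_slopedSection] at hb₃ hb₄
  simp only [Option.some.injEq] at hp
  obtain ⟨rfl, rfl⟩ := slope_eq_and_intercept_eq_of_x_eq hα hb₃.1 hb₃.2.1 hb₃.2.2
    hb₄.1 hb₄.2.1 hb₄.2.2 (hb₁.2.2.trans hb₁.2.1.symm) (hb₂.2.2.trans hb₂.2.1.symm)
    (by tauto) (by tauto) (by tauto)
  exact hne₃₄ rfl

section

variable [Fact (Nat.card K = 16)]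

theorem isONanVertex_some_one : IsONanVertex (blocks (1 : K)) (some 1) := by
  -- The coordinates of this configuration come from a computer search.
  obtain ⟨ζ, hζ⟩ := exists_pow_four_eq_add_one K
  have point {x y : K} (h : y + y ^ 4 = x ^ 5 + (1 * x ^ 2 + (1 * x ^ 2) ^ 4)) :
      ∃ p : AffinePoint (1 : K), p.x = x ∧ p.y = y := ⟨⟨x, y, h⟩, rfl, rfl⟩
  obtain ⟨p₁₃, hx₁₃, hy₁₃⟩ := point (x := 1) (y := ζ ^ 2) (by grind)
  obtain ⟨p₁₄, hx₁₄, hy₁₄⟩ := point (x := ζ ^ 3 + 1) (y := ζ) (by grind)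
  obtain ⟨p₂₃, hx₂₃, hy₂₃⟩ := point (x := 0) (y := ζ ^ 2 + ζ) (by grind)
  obtain ⟨p₂₄, hx₂₄, hy₂₄⟩ := point (x := 0) (y := 1) (by grind)
  obtain ⟨p₃₄, hx₃₄, hy₃₄⟩ := point (x := ζ ^ 2 + 1) (y := ζ ^ 3 + ζ ^ 2) (by grind)
  have hx₁ := AffinePoint.one_x (α := (1 : K))
  have hy₁ := AffinePoint.one_y (α := (1 : K))
  have h₁₃ : p₁₃ ≠ 1 := by grind
  refine ⟨slopedSection 1 (ζ ^ 2) 0, slopedSection_mem_blocks (p := 1) (q := p₁₃) ?_ ?_ ?_,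
    verticalBlock 1 0, verticalBlock_mem_blocks 0,
    slopedSection 1 ζ (ζ ^ 2 + ζ),
      slopedSection_mem_blocks (p := p₁₃) (q := p₂₃) ?_ ?_ ?_,
    slopedSection 1 (ζ ^ 2 + ζ) 1,
      slopedSection_mem_blocks (p := p₁₄) (q := p₂₄) ?_ ?_ ?_,
    some p₁₃, some p₁₄, some p₂₃, some p₂₄, some p₃₄, ?_, ?_, ?_, ?_, ?_, ?_⟩
  case refine_10 =>
    simp only [List.nodup_cons, List.mem_cons, List.not_mem_nil, not_or, or_false,
      not_false_eq_true, List.nodup_nil, and_true]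
    exact ⟨⟨slopedSection_ne_verticalBlock, slopedSection_ne 1 (by grind) (by grind),
        slopedSection_ne 1 (by grind) (by grind)⟩,
      ⟨slopedSection_ne_verticalBlock.symm, slopedSection_ne_verticalBlock.symm⟩,
      slopedSection_ne p₁₃ (by grind) (by grind)⟩
  case refine_11 =>
    simp only [List.nodup_cons, List.mem_cons, List.not_mem_nil, not_or, or_false,
      not_false_eq_true, List.nodup_nil, and_true, Option.some.injEq]
    refine ⟨⟨?_, ?_, ?_, ?_, ?_⟩, ⟨?_, ?_, ?_, ?_⟩, ⟨?_, ?_, ?_⟩, ⟨?_, ?_⟩, ?_⟩ <;> grind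
  all_goals
    try simp only [Set.insert_subset_iff, Set.singleton_subset_iff, some_mem_slopedSection,
      some_mem_verticalBlock]
    grind

end

open scoped Classical in
/-- The involution `(x, y) ↦ (x / y, 1 / y)` of the classical unital, which exchanges
the point at infinity and the origin. -/
def inversionFun (K : Type*) [Field K] [CharP K 2] :
    Option (AffinePoint (0 : K)) → Option (AffinePoint (0 : K))
  | none => some 1
  | some p =>
    if hy : p.y = 0 then none else some
      { x := p.x / p.y
        y := p.y⁻¹
        relTrace_y := by
          have := p.relTrace_y
          simp only [relTrace_apply, quadForm] at this ⊢
          grind }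

theorem inversionFun_none : inversionFun K none = some 1 := rfl

theorem inversionFun_some_of_y_eq_zero {p : AffinePoint (0 : K)} (hy : p.y = 0) :
    inversionFun K (some p) = none := dif_pos hy

theorem exists_inversionFun_some_eq {p : AffinePoint (0 : K)} (hy : p.y ≠ 0) :
    ∃ q : AffinePoint (0 : K), inversionFun K (some p) = some q ∧ q.x = p.x / p.y ∧ q.y = p.y⁻¹ :=
  ⟨_, dif_neg hy, rfl, rfl⟩

theorem AffinePoint.eq_one_of_y_eq_zero {p : AffinePoint (0 : K)} (hy : p.y = 0) : p = 1 := by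
  refine AffinePoint.ext (isAnisotropic_zero _ ?_) hy
  rw [← p.relTrace_y, hy, map_zero]

theorem inversionFun_involutive : Function.Involutive (inversionFun K) := by
  rintro (_ | p)
  · exact inversionFun_some_of_y_eq_zero AffinePoint.one_y
  · by_cases hy : p.y = 0
    · rw [inversionFun_some_of_y_eq_zero hy, inversionFun_none, AffinePoint.eq_one_of_y_eq_zero hy]
    · obtain ⟨q, hq, hqx, hqy⟩ := exists_inversionFun_some_eq hy
      obtain ⟨r, hr, hrx, hry⟩ := exists_inversionFun_some_eq (hqy.trans_ne (inv_ne_zero hy))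
      rw [hq, hr]
      refine congrArg some (AffinePoint.ext ?_ ?_)
      · rw [hrx, hqx, hqy]
        field_simp
      · rw [hry, hqy, inv_inv]

variable (K) in
/-- `inversionFun` as a permutation. -/
def inversion : Equiv.Perm (Option (AffinePoint (0 : K))) :=
  inversionFun_involutive.toPerm

theorem inversion_apply (p : Option (AffinePoint (0 : K))) : inversion K p = inversionFun K p := rfl

theorem inversion_preimage_eq {s t : Set (Option (AffinePoint (0 : K)))}
    (h₀ : none ∈ s ↔ some 1 ∈ t) (h₁ : some 1 ∈ s ↔ none ∈ t)
    (h : ∀ p q : AffinePoint (0 : K), p.y ≠ 0 → q.x = p.x / p.y → q.y = p.y⁻¹ →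
      (some q ∈ s ↔ some p ∈ t)) :
    inversion K ⁻¹' s = t := by
  ext p
  rw [Set.mem_preimage, inversion_apply]
  rcases p with _ | p
  · exact h₁
  · by_cases hy : p.y = 0
    · rw [inversionFun_some_of_y_eq_zero hy, AffinePoint.eq_one_of_y_eq_zero hy]
      exact h₀
    · obtain ⟨q, hq, hqx, hqy⟩ := exists_inversionFun_some_eq hy
      rw [hq]
      exact h p q hy hqx hqy

theorem inversion_preimage_verticalBlock (x₀ : K) :
    inversion K ⁻¹' verticalBlock 0 x₀ ∈ lineSections 0 := by
  rcases eq_or_ne x₀ 0 with rfl | hx₀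
  · refine .inl ⟨0, inversion_preimage_eq ?_ ?_ fun p q hy hx _ => ?_⟩
    · simp [none_mem_verticalBlock, some_mem_verticalBlock, AffinePoint.one_x]
    · simp [none_mem_verticalBlock, some_mem_verticalBlock, AffinePoint.one_x]
    · simp [some_mem_verticalBlock, hx, hy]
  · refine .inr ⟨x₀⁻¹, 0, inversion_preimage_eq ?_ ?_ fun p q hy hx _ => ?_⟩
    · simp [none_mem_verticalBlock, some_mem_slopedSection, AffinePoint.one_x, AffinePoint.one_y]
    · simp [none_notMem_slopedSection, some_mem_verticalBlock, AffinePoint.one_x, hx₀.symm]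
    · rw [some_mem_verticalBlock, some_mem_slopedSection, hx]
      grind

theorem inversion_preimage_slopedSection {m k : K} (h : (slopedSection 0 m k).Nontrivial) :
    inversion K ⁻¹' slopedSection 0 m k ∈ lineSections 0 := by
  rcases eq_or_ne k 0 with rfl | hk
  · have hm : m ≠ 0 := by
      rintro rfl
      obtain ⟨_, ⟨p, hp, rfl⟩, _, ⟨q, hq, rfl⟩, hpq⟩ := h
      refine hpq (congrArg some ?_)
      rw [AffinePoint.eq_one_of_y_eq_zero (p := p) (by simpa using hp),
        AffinePoint.eq_one_of_y_eq_zero (p := q) (by simpa using hq)]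
    refine .inl ⟨m⁻¹, inversion_preimage_eq ?_ ?_ fun p q hy hx hy' => ?_⟩
    · simp [none_notMem_slopedSection, some_mem_verticalBlock, AffinePoint.one_x, hm.symm]
    · simp [none_mem_verticalBlock, some_mem_slopedSection, AffinePoint.one_x, AffinePoint.one_y]
    · rw [some_mem_slopedSection, some_mem_verticalBlock, hx, hy']
      grind
  · refine .inr ⟨m / k, k⁻¹, inversion_preimage_eq ?_ ?_ fun p q hy hx hy' => ?_⟩
    · simp [none_notMem_slopedSection, some_mem_slopedSection, AffinePoint.one_x,
        AffinePoint.one_y, hk.symm]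
    · simp [none_notMem_slopedSection, some_mem_slopedSection, AffinePoint.one_x,
        AffinePoint.one_y, hk.symm]
    · rw [some_mem_slopedSection, some_mem_slopedSection, hx, hy']
      grind

theorem inversion_mem_designAut [Finite K] : inversion K ∈ designAut (blocks 0) :=
  mem_designAut_of_forall_preimage_mem_lineSections inversion_preimage_verticalBlock
    fun _ _ => inversion_preimage_slopedSection

theorem card_stabilizer_none :
    Nat.card (MulAction.stabilizer (designAut (blocks α)) (none : Option (AffinePoint α))) =
      Nat.card (affineAut α) := by
  refine (Nat.card_congr (Equiv.ofBijective (fun f : affineAut α =>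
    ⟨⟨f.1.optionCongr, optionCongr_mem_designAut_iff.2 f.2⟩, rfl⟩) ⟨?_, ?_⟩)).symm
  · intro f g h
    exact Subtype.ext (Equiv.optionCongr_injective (congrArg (fun s => s.1.1) h))
  · rintro ⟨⟨g, hg⟩, hnone⟩
    obtain ⟨f, hf, rfl⟩ := exists_optionCongr_eq hg hnone
    exact ⟨⟨f, hf⟩, rfl⟩

section

variable [Fact (Nat.card K = 16)]

instance : MulAction.IsPretransitive (affineAut α) (AffinePoint α) where
  exists_smul_eq p q :=
    ⟨⟨Equiv.mulLeft (q * p⁻¹), mulLeft_mem_affineAut _⟩, inv_mul_cancel_right q p⟩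

theorem card_affineAut (hα : IsAnisotropic α) :
    Nat.card (affineAut α) = 64 * Nat.card (Semilinear α) := by
  rw [← Subgroup.index_mul_card (MulAction.stabilizer (affineAut α) (1 : AffinePoint α)),
    MulAction.index_stabilizer_of_transitive, card_stabilizer_one hα, AffinePoint.card_affinePoint]

theorem exists_apply_some_one_eq (p : AffinePoint α) :
    ∃ g ∈ designAut (blocks α), g (some 1) = some p :=
  ⟨_, optionCongr_mem_designAut_iff.2 (mulLeft_mem_affineAut p), congrArg some (mul_one p)⟩

theorem isONanVertex_one_iff {p : Option (AffinePoint (1 : K))} :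
    IsONanVertex (blocks 1) p ↔ p ≠ none := by
  refine ⟨fun h hp => not_isONanVertex_none isAnisotropic_one (hp ▸ h), fun h => ?_⟩
  obtain ⟨q, rfl⟩ := Option.ne_none_iff_exists'.1 h
  obtain ⟨g, hg, hgq⟩ := exists_apply_some_one_eq q
  rw [← hgq, isONanVertex_apply_iff hg]
  exact isONanVertex_some_one

variable (K) in
theorem card_designAut_one : Nat.card (designAut (blocks (1 : K))) = 768 := by
  have hfix : MulAction.stabilizer (designAut (blocks (1 : K)))
      (none : Option (AffinePoint (1 : K))) = ⊤ := by
    refine (Subgroup.eq_top_iff' _).2 fun g => not_not.1 fun h => ?_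
    exact not_isONanVertex_none isAnisotropic_one
      ((isONanVertex_apply_iff g.2).1 (isONanVertex_one_iff.2 h))
  rw [← Subgroup.card_top, ← hfix, card_stabilizer_none, card_affineAut isAnisotropic_one,
    card_semilinear_one]

theorem exists_apply_none_eq (p : Option (AffinePoint (0 : K))) :
    ∃ g ∈ designAut (blocks 0), g none = p := by
  rcases p with _ | p
  · exact ⟨1, one_mem _, rfl⟩
  · obtain ⟨g, hg, hgp⟩ := exists_apply_some_one_eq p
    exact ⟨g * inversion K, mul_mem hg inversion_mem_designAut, hgp⟩

theorem not_isONanVertex_zero (p : Option (AffinePoint (0 : K))) :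
    ¬ IsONanVertex (blocks 0) p := by
  obtain ⟨g, hg, rfl⟩ := exists_apply_none_eq p
  rw [isONanVertex_apply_iff hg]
  exact not_isONanVertex_none isAnisotropic_zero

variable (K) in
theorem card_designAut_zero : Nat.card (designAut (blocks (0 : K))) = 249600 := by
  have : MulAction.IsPretransitive (designAut (blocks (0 : K))) (Option (AffinePoint (0 : K))) :=
    (MulAction.isPretransitive_iff_base none).2 fun p =>
      let ⟨g, hg, hgp⟩ := exists_apply_none_eq p
      ⟨⟨g, hg⟩, hgp⟩
  rw [← Subgroup.index_mul_card (MulAction.stabilizer (designAut (blocks (0 : K)))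
      (none : Option (AffinePoint (0 : K)))),
    MulAction.index_stabilizer_of_transitive, card_stabilizer_none,
    card_affineAut isAnisotropic_zero, card_semilinear_zero, Finite.card_option,
    AffinePoint.card_affinePoint]

end

end Orders

/-! ### The unitals in the projective plane -/

section Lines

variable {K : Type*} [Field K]

theorem exists_ker_eq_of_finrank_add_one {V : Type*} [AddCommGroup V] [Module K V]
    [FiniteDimensional K V] {W : Submodule K V}
    (hW : Module.finrank K W + 1 = Module.finrank K V) :
    ∃ f : Module.Dual K V, f ≠ 0 ∧ LinearMap.ker f = W := by
  have hlt : W < ⊤ := lt_top_iff_ne_top.2 fun h => by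
    rw [h, finrank_top] at hW
    omega
  obtain ⟨f, hf, hWf⟩ := W.exists_le_ker_of_lt_top hlt
  have hker := Module.Dual.finrank_ker_add_one_of_ne_zero hf
  exact ⟨f, hf, (Submodule.eq_of_le_of_finrank_eq hWf (by omega)).symm⟩

theorem finrank_eq_two_iff_exists_normal {W : Submodule K (Fin 3 → K)} :
    Module.finrank K W = 2 ↔
      ∃ w : Fin 3 → K, w ≠ 0 ∧ LinearMap.ker (dotProductEquiv K (Fin 3) w) = W := by
  constructor
  · intro hW
    obtain ⟨f, hf, hfW⟩ := exists_ker_eq_of_finrank_add_one (K := K) (W := W) (by simp [hW])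
    obtain ⟨w, rfl⟩ := (dotProductEquiv K (Fin 3)).surjective f
    exact ⟨w, (map_ne_zero_iff _ (dotProductEquiv K (Fin 3)).injective).1 hf, hfW⟩
  · rintro ⟨w, hw, rfl⟩
    have hker := Module.Dual.finrank_ker_add_one_of_ne_zero
      ((map_ne_zero_iff _ (dotProductEquiv K (Fin 3)).injective).2 hw)
    rw [Module.finrank_fin_fun] at hker
    omega

end Lines

section Embedding

variable {K : Type*} [Field K] [CharP K 2] {α : K}

/-- The embedding of the unital into the projective plane: the points `[0 : 1 : 0]` and
`[x : y : 1]`. -/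
def toPlane : Option (AffinePoint α) → Projectivization K (Fin 3 → K)
  | none => .mk K ![0, 1, 0] fun h => one_ne_zero (congrFun h 1)
  | some p => .mk K ![p.x, p.y, 1] fun h => one_ne_zero (congrFun h 2)

theorem toPlane_injective : Function.Injective (toPlane (α := α)) := by
  rintro (_ | p) (_ | q) h
  · rfl
  · obtain ⟨a, ha⟩ := (Projectivization.mk_eq_mk_iff' K _ _ _ _).1 h
    have ha₀ : a = 0 := by simpa using congrFun ha 2
    exact absurd (congrFun ha 1) (by simp [ha₀])
  · obtain ⟨a, ha⟩ := (Projectivization.mk_eq_mk_iff' K _ _ _ _).1 h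
    exact absurd (congrFun ha 2) (by simp)
  · obtain ⟨a, ha⟩ := (Projectivization.mk_eq_mk_iff' K _ _ _ _).1 h
    have ha₁ : a = 1 := by simpa using congrFun ha 2
    rw [ha₁, one_smul] at ha
    exact congrArg some (AffinePoint.ext (congrFun ha 0).symm (congrFun ha 1).symm)

/-- The points of the unital on the line of the projective plane given by the subspace `W`. -/
def lineSection (α : K) (W : Submodule K (Fin 3 → K)) : Set (Option (AffinePoint α)) :=
  {p | (toPlane p).submodule ≤ W}

theorem none_mem_lineSection_ker {w : Fin 3 → K} :
    none ∈ lineSection α (LinearMap.ker (dotProductEquiv K (Fin 3) w)) ↔ w 1 = 0 := by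
  simp [lineSection, toPlane, Projectivization.submodule_mk, Submodule.span_singleton_le_iff_mem,
    dotProduct, Fin.sum_univ_three]

theorem some_mem_lineSection_ker {w : Fin 3 → K} {p : AffinePoint α} :
    some p ∈ lineSection α (LinearMap.ker (dotProductEquiv K (Fin 3) w)) ↔
      w 0 * p.x + w 1 * p.y + w 2 = 0 := by
  simp [lineSection, toPlane, Projectivization.submodule_mk, Submodule.span_singleton_le_iff_mem,
    dotProduct, Fin.sum_univ_three]

theorem lineSection_eq_singleton_or_mem_lineSections {W : Submodule K (Fin 3 → K)}
    (hW : Module.finrank K W = 2) :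
    lineSection α W = {none} ∨ lineSection α W ∈ lineSections α := by
  obtain ⟨w, hw, rfl⟩ := finrank_eq_two_iff_exists_normal.1 hW
  by_cases h₁ : w 1 = 0
  · by_cases h₀ : w 0 = 0
    · have h₂ : w 2 ≠ 0 := fun h₂ => hw (by ext i; fin_cases i <;> assumption)
      refine .inl (Set.ext ?_)
      rintro (_ | p)
      · simp [none_mem_lineSection_ker, h₁]
      · simp [some_mem_lineSection_ker, h₀, h₁, h₂]
    · refine .inr (.inl ⟨w 2 / w 0, Set.ext ?_⟩)
      rintro (_ | p)
      · simp [none_mem_lineSection_ker, none_mem_verticalBlock, h₁]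
      · rw [some_mem_lineSection_ker, some_mem_verticalBlock]
        grind
  · refine .inr (.inr ⟨w 0 / w 1, w 2 / w 1, Set.ext ?_⟩)
    rintro (_ | p)
    · simp [none_mem_lineSection_ker, none_notMem_slopedSection, h₁]
    · rw [some_mem_lineSection_ker, some_mem_slopedSection]
      grind

theorem exists_lineSection_eq {b : Set (Option (AffinePoint α))} (hb : b ∈ lineSections α) :
    ∃ W : Submodule K (Fin 3 → K), Module.finrank K W = 2 ∧ lineSection α W = b := by
  rcases hb with ⟨x₀, rfl⟩ | ⟨m, k, rfl⟩
  · refine ⟨_, finrank_eq_two_iff_exists_normal.2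
      ⟨![1, 0, x₀], fun h => one_ne_zero (congrFun h 0), rfl⟩, Set.ext ?_⟩
    rintro (_ | p)
    · simp [none_mem_lineSection_ker, none_mem_verticalBlock]
    · simp [some_mem_lineSection_ker, some_mem_verticalBlock, CharTwo.add_eq_zero]
  · refine ⟨_, finrank_eq_two_iff_exists_normal.2
      ⟨![m, 1, k], fun h => one_ne_zero (congrFun h 1), rfl⟩, Set.ext ?_⟩
    rintro (_ | p)
    · simp [none_mem_lineSection_ker, none_notMem_slopedSection]
    · simp only [some_mem_lineSection_ker, some_mem_slopedSection, Matrix.cons_val]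
      grind

variable [Fact (Nat.card K = 16)]

theorem ncard_verticalBlock (x₀ : K) : (verticalBlock α x₀).ncard = 5 := by
  rw [verticalBlock, Set.ncard_insert_of_notMem (by simp),
    Set.ncard_image_of_injective _ (Option.some_injective _), AffinePoint.ncard_x_eq]

theorem ncard_of_mem_lineSections (hα : IsAnisotropic α) {b : Set (Option (AffinePoint α))}
    (hb : b ∈ lineSections α) : b.ncard = 1 ∨ b.ncard = 5 := by
  rcases hb with ⟨x₀, rfl⟩ | ⟨m, k, rfl⟩
  · exact .inr (ncard_verticalBlock x₀)
  · rw [slopedSection, Set.ncard_image_of_injective _ (Option.some_injective _)]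
    exact AffinePoint.ncard_line hα m k

theorem ncard_lineSection (hα : IsAnisotropic α) {W : Submodule K (Fin 3 → K)}
    (hW : Module.finrank K W = 2) :
    (lineSection α W).ncard = 1 ∨ (lineSection α W).ncard = 5 := by
  rcases lineSection_eq_singleton_or_mem_lineSections hW with h | h
  · exact .inl (h ▸ Set.ncard_singleton none)
  · exact ncard_of_mem_lineSections hα h

theorem mem_blocks_iff_exists_lineSection (hα : IsAnisotropic α)
    {b : Set (Option (AffinePoint α))} :
    b ∈ blocks α ↔ ∃ W : Submodule K (Fin 3 → K), Module.finrank K W = 2 ∧ b.ncard = 5 ∧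
      lineSection α W = b := by
  constructor
  · rintro ⟨hb, hbn⟩
    obtain ⟨W, hW, hWb⟩ := exists_lineSection_eq hb
    have := Set.one_lt_ncard_iff_nontrivial.2 hbn
    exact ⟨W, hW, (ncard_of_mem_lineSections hα hb).resolve_left this.ne', hWb⟩
  · rintro ⟨W, hW, h5, rfl⟩
    have hnt := Set.one_lt_ncard_iff_nontrivial.1 (h5 ▸ (by norm_num : 1 < 5))
    refine ⟨(lineSection_eq_singleton_or_mem_lineSections hW).resolve_left fun h => ?_, hnt⟩
    exact hnt.ne_singleton h

end Embedding

instance : Fact (Nat.card K16 = 16) := ⟨GaloisField.card 2 4 (by norm_num)⟩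

section ProjectivePlane

variable {α : K16}

/-- The unital `{[0 : 1 : 0]} ∪ {[x : y : 1] | y + y ^ 4 = quadForm α x}`: the classical unital for
`α = 0`, and a Buekenhout–Metz unital for `α = 1`. -/
def unital (α : K16) : Set PG216 := Set.range (toPlane (α := α))

theorem unital_inter_line (W : Submodule K16 V16) :
    unital α ∩ {p : PG216 | p.submodule ≤ W} = toPlane '' lineSection α W :=
  Set.image_preimage_eq_range_inter.symm

theorem isUnitalPG_unital (hα : IsAnisotropic α) : IsUnitalPG (unital α) := by
  refine ⟨?_, fun W hW => ?_⟩
  · rw [unital, ← Nat.card_coe_set_eq, Nat.card_range_of_injective toPlane_injective,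
      Finite.card_option, AffinePoint.card_affinePoint]
  · rw [unital_inter_line, Set.ncard_image_of_injective _ toPlane_injective]
    exact ncard_lineSection hα hW

/-- The parametrization of the unital by its affine points and the point at infinity. -/
def unitalEquiv (α : K16) : Option (AffinePoint α) ≃ unital α :=
  Equiv.ofInjective toPlane toPlane_injective

theorem image_unitalEquiv_mem_blocksOf_iff (hα : IsAnisotropic α)
    (b : Set (Option (AffinePoint α))) :
    unitalEquiv α '' b ∈ blocksOf (unital α) ↔ b ∈ blocks α := by
  have image_lineSection (W : Submodule K16 V16) :
      {p : unital α | p.1.submodule ≤ W} = unitalEquiv α '' lineSection α W :=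
    (Set.image_preimage_eq _ (unitalEquiv α).surjective).symm
  rw [mem_blocks_iff_exists_lineSection hα]
  refine exists_congr fun W => and_congr_right fun _ => ?_
  rw [unital_inter_line, Set.ncard_image_of_injective _ toPlane_injective, image_lineSection,
    (unitalEquiv α).injective.image_injective.eq_iff]
  constructor
  · rintro ⟨h, rfl⟩
    exact ⟨h, rfl⟩
  · rintro ⟨h, rfl⟩
    exact ⟨h, rfl⟩

theorem card_designAut_unital (hα : IsAnisotropic α) :
    Nat.card {σ : Equiv.Perm (unital α) //
        ∀ b ∈ blocksOf (unital α), σ '' b ∈ blocksOf (unital α)} =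
      Nat.card (designAut (blocks α)) :=
  card_image_preserving_eq_card_designAut (unitalEquiv α) (image_unitalEquiv_mem_blocksOf_iff hα)

theorem isONanVertex_unitalEquiv_iff (hα : IsAnisotropic α) {p : Option (AffinePoint α)} :
    IsONanVertex (blocksOf (unital α)) (unitalEquiv α p) ↔ IsONanVertex (blocks α) p := by
  constructor
  · intro h
    simpa using h.map (B' := blocks α) (unitalEquiv α).symm.injective fun b hb => by
      rwa [← image_unitalEquiv_mem_blocksOf_iff hα, Equiv.image_symm_image]
  · exact fun h => h.map (unitalEquiv α).injective fun b =>
      (image_unitalEquiv_mem_blocksOf_iff hα b).2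

theorem not_designIso_unital_one_zero :
    ¬ DesignIso (blocksOf (unital 1)) (blocksOf (unital 0)) := by
  rintro ⟨f, hf⟩
  have h := ((isONanVertex_unitalEquiv_iff isAnisotropic_one).2 isONanVertex_some_one).map
    f.injective hf
  obtain ⟨p, hp⟩ := (unitalEquiv 0).surjective (f (unitalEquiv 1 (some 1)))
  rw [← hp, isONanVertex_unitalEquiv_iff isAnisotropic_zero] at h
  exact not_isONanVertex_zero p h

end ProjectivePlane

/-- There are two unitals in `PG(2,16)` whose associated `2-(65,5,1)` designs are
non-isomorphic; moreover they can be chosen so that the full automorphism groups of the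
two designs have orders 768 and 249600 respectively. -/
theorem exists_two_nonisomorphic_unital_designs_in_PG216 :
    ∃ U₁ U₂ : Set PG216, IsUnitalPG U₁ ∧ IsUnitalPG U₂ ∧
      ¬ DesignIso (blocksOf U₁) (blocksOf U₂) ∧
      Nat.card {σ : Equiv.Perm ↥U₁ // ∀ b ∈ blocksOf U₁, ⇑σ '' b ∈ blocksOf U₁} = 768 ∧
      Nat.card {σ : Equiv.Perm ↥U₂ // ∀ b ∈ blocksOf U₂, ⇑σ '' b ∈ blocksOf U₂} = 249600 :=
  ⟨unital 1, unital 0, isUnitalPG_unital isAnisotropic_one, isUnitalPG_unital isAnisotropic_zero,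
    not_designIso_unital_one_zero,
    (card_designAut_unital isAnisotropic_one).trans (card_designAut_one K16),
    (card_designAut_unital isAnisotropic_zero).trans (card_designAut_zero K16)⟩
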